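/- arXiv:1608.02014 — 7 statements merged into one kernel-verified Lean document; each statement's English description precedes it below -/
import Mathlib

section
/- Let M = X_0, X_1, X_2, ... be a stationary reversible Markov chain on a measurable state space S with stationary distribution π (so X_0 ~ π), and let ω : S → ℝ be a measurable label function. Then for any fixed k ∈ ℕ and any ε ∈ [0,1], the probability that ω(X_0) is an ε-outlier among ω(X_0), ω(X_1), ..., ω(X_k) is at most √(2ε). -/
open MeasureTheory ProbabilityTheory Finset
open scoped ENNReal

/-- Extend a path by one point. -/
def extPath {S : Type*} {m : ℕ} (x : Fin (m + 1) → S) (y : S) : Fin (m + 2) → S :=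
  fun i => if h : (i : ℕ) < m + 1 then x ⟨i, h⟩ else y

lemma measurable_extPath {S : Type*} [MeasurableSpace S] {m : ℕ} :
    Measurable (fun p : (Fin (m + 1) → S) × S => extPath p.1 p.2) := by
  refine measurable_pi_iff.2 fun i => ?_
  unfold extPath
  by_cases h : (i : ℕ) < m + 1
  · simp only [h, dite_true]
    exact (measurable_pi_apply _).comp measurable_fst
  · simp only [h, dite_false]
    exact measurable_snd

lemma exists_forward
    {Ω S : Type*} [MeasurableSpace Ω] [MeasurableSpace S]
    (μ : Measure Ω) [IsProbabilityMeasure μ]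
    (X : ℕ → Ω → S) (hXmeas : ∀ i, Measurable (X i))
    (κ : Kernel S S) [IsMarkovKernel κ]
    (hMarkov : ∀ n : ℕ,
      Measure.map (fun a => ((fun i : Fin (n + 1) => X i a), X (n + 1) a)) μ
        = (Measure.map (fun a => fun i : Fin (n + 1) => X i a) μ)
            ⊗ₘ (κ.comap (fun s : Fin (n + 1) → S => s (Fin.last n)) (measurable_pi_apply _)))
    (m : ℕ) : ∀ (g : (Fin (m + 1) → S) → ℝ≥0∞), Measurable g →
      ∃ h : S → ℝ≥0∞, Measurable h ∧ ∀ (n : ℕ) (F : (Fin (n + 1) → S) → ℝ≥0∞), Measurable F →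
        ∫⁻ a, F (fun i => X i a) * g (fun i => X (n + i) a) ∂μ
          = ∫⁻ a, F (fun i => X i a) * h (X n a) ∂μ := by
  induction m with
  | zero =>
    intro g hg
    refine ⟨fun s => g (fun _ => s), hg.comp (measurable_pi_iff.2 fun _ => measurable_id), ?_⟩
    intro n F hF
    refine lintegral_congr fun a => ?_
    congr 2
    funext i
    have : (i : ℕ) = 0 := by omega
    rw [this]; rfl
  | succ m ih =>
    intro g hg
    have hκ : Measurable (fun x : Fin (m + 1) → S =>
        ∫⁻ y, g (extPath x y) ∂(κ (x (Fin.last m)))) := by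
      have := Measurable.lintegral_kernel_prod_right'
        (κ := κ.comap (fun s : Fin (m + 1) → S => s (Fin.last m)) (measurable_pi_apply _))
        (hg.comp (measurable_extPath (S := S) (m := m)))
      simpa [Kernel.comap_apply] using this
    obtain ⟨h, hh, H⟩ := ih _ hκ
    refine ⟨h, hh, fun n F hF => ?_⟩
    rw [← H n F hF]
    have hpath : ∀ N : ℕ, Measurable (fun a => fun i : Fin (N + 1) => X i a) :=
      fun N => measurable_pi_iff.2 fun i => hXmeas i
    -- the restriction maps
    let r : (Fin (n + m + 1) → S) → (Fin (n + 1) → S) := fun x i => x ⟨i, by omega⟩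
    let t : (Fin (n + m + 1) → S) → (Fin (m + 1) → S) := fun x i => x ⟨n + i, by omega⟩
    have hr : Measurable r := measurable_pi_iff.2 fun i => measurable_pi_apply _
    have ht : Measurable t := measurable_pi_iff.2 fun i => measurable_pi_apply _
    have hG0 : Measurable (fun p : (Fin (n + m + 1) → S) × S => g (extPath (t p.1) p.2)) :=
      hg.comp (measurable_extPath.comp ((ht.comp measurable_fst).prodMk measurable_snd))
    have hG : Measurable (fun p : (Fin (n + m + 1) → S) × S =>
        F (r p.1) * g (extPath (t p.1) p.2)) :=
      (hF.comp (hr.comp measurable_fst)).mul hG0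
    have e1 := lintegral_map (μ := μ) hG ((hpath (n + m)).prodMk (hXmeas (n + m + 1)))
    rw [hMarkov (n + m), Measure.lintegral_compProd hG] at e1
    have hI : Measurable (fun x : Fin (n + m + 1) → S =>
        F (r x) * ∫⁻ y, g (extPath (t x) y) ∂(κ (t x (Fin.last m)))) :=
      (hF.comp hr).mul (hκ.comp ht)
    have e2 := lintegral_map (μ := μ) hI (hpath (n + m))
    have e3 : ∫⁻ a, F (fun i => X i a) * g (fun i => X (n + i) a) ∂μ
        = ∫⁻ a, F (r (fun i => X i a)) * g (extPath (t (fun i => X i a)) (X (n + m + 1) a)) ∂μ := by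
      refine lintegral_congr fun a => ?_
      congr 2
      funext i
      unfold extPath
      split_ifs with hi
      · rfl
      · have : (i : ℕ) = m + 1 := by omega
        rw [this]; rfl
    rw [e3, ← e1]
    refine Eq.trans (lintegral_congr fun x => ?_) e2
    exact lintegral_const_mul (F (r x)) (f := fun y => g (extPath (t x) y))
      (hG0.comp measurable_prodMk_left)

open Classical in
lemma comb_bound (w : ℕ → ℝ) (k : ℕ) (c : ℝ) (hc : 0 ≤ c) (T : Finset ℕ)
    (hT : T ⊆ Finset.Icc k (2 * k))
    (h1 : ∀ n ∈ T, (((Finset.range (k + 1)).filter (fun i => w (n - i) ≤ w n)).card : ℝ) ≤ c)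
    (h2 : ∀ n ∈ T, (((Finset.range (k + 1)).filter (fun i => w (n + i) ≤ w n)).card : ℝ) ≤ c) :
    (T.card : ℝ) ≤ 2 * c := by
  rcases T.eq_empty_or_nonempty with rfl | hne
  · simpa using hc
  obtain ⟨n, hn, hmax⟩ := T.exists_max_image w hne
  have hsub : T ⊆ ((Finset.range (k + 1)).filter (fun i => w (n - i) ≤ w n)).image (fun i => n - i)
      ∪ ((Finset.range (k + 1)).filter (fun i => w (n + i) ≤ w n)).image (fun i => n + i) := by
    intro j hj
    have a := Finset.mem_Icc.1 (hT hj)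
    have b := Finset.mem_Icc.1 (hT hn)
    have hw := hmax j hj
    rw [Finset.mem_union, Finset.mem_image, Finset.mem_image]
    rcases le_total j n with hjn | hjn
    · left
      have e : n - (n - j) = j := by omega
      refine ⟨n - j, ?_, e⟩
      rw [Finset.mem_filter, Finset.mem_range, e]
      exact ⟨by omega, hw⟩
    · right
      have e : n + (j - n) = j := by omega
      refine ⟨j - n, ?_, e⟩
      rw [Finset.mem_filter, Finset.mem_range, e]
      exact ⟨by omega, hw⟩
  have h3 := (Finset.card_le_card hsub).trans ((Finset.card_union_le _ _).trans
    (add_le_add Finset.card_image_le Finset.card_image_le))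
  have h4 : (T.card : ℝ) ≤ _ := Nat.cast_le.2 h3
  push_cast at h4
  linarith [h1 n hn, h2 n hn]

lemma sq_lintegral_le {Ω : Type*} [MeasurableSpace Ω] (μ : Measure Ω) [IsProbabilityMeasure μ]
    (f : Ω → ℝ≥0∞) (hf : Measurable f) : (∫⁻ a, f a ∂μ) ^ 2 ≤ ∫⁻ a, f a * f a ∂μ := by
  have h := ENNReal.lintegral_mul_le_Lp_mul_Lq μ Real.HolderConjugate.two_two hf.aemeasurable
    (aemeasurable_const (b := (1 : ℝ≥0∞)))
  simp only [Pi.mul_apply, mul_one, ENNReal.one_rpow, lintegral_const, measure_univ,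
    ENNReal.rpow_ofNat, one_pow] at h
  calc (∫⁻ a, f a ∂μ) ^ 2 ≤ ((∫⁻ a, f a ^ 2 ∂μ) ^ (1 / 2 : ℝ)) ^ 2 := by gcongr
    _ = ∫⁻ a, f a * f a ∂μ := by
      rw [← ENNReal.rpow_natCast, ← ENNReal.rpow_mul]
      norm_num [pow_two]

/-- Let `X 0, X 1, X 2, ...` be a stationary reversible Markov chain on a
measurable state space `S` (with Markov transition kernel `κ`) having stationary distribution
`π` (so `X 0 ~ π`), and let `ω : S → ℝ` be a measurable label function.  Then for any fixed
`k : ℕ` and any `ε ∈ [0,1]`, the probability that `ω (X 0)` is an `ε`-outlier among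
`ω (X 0), ω (X 1), ..., ω (X k)` — i.e. that there are at most `ε * (k+1)` indices
`i ∈ {0,...,k}` with `ω (X i) ≤ ω (X 0)` — is at most `√(2ε)`.  Reversibility is formulated as
in the paper: for every `k`, the joint distribution of `(X 0, ..., X k)` equals the joint
distribution of `(X k, ..., X 0)`. -/
theorem sqrt_eps_test
    {Ω S : Type*} [MeasurableSpace Ω] [MeasurableSpace S]
    (μ : Measure Ω) [IsProbabilityMeasure μ]
    (X : ℕ → Ω → S) (hXmeas : ∀ i, Measurable (X i))
    (κ : Kernel S S) [IsMarkovKernel κ]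
    (π : Measure S) [IsProbabilityMeasure π]
    -- `X 0 ~ π`
    (hX0 : Measure.map (X 0) μ = π)
    -- `π` is stationary for the kernel `κ`
    (hstat : π.bind (fun s => κ s) = π)
    -- Markov property: the law of `((X 0, ..., X n), X (n+1))` is the law of `(X 0, ..., X n)`
    -- composed with the kernel `κ` applied to the last coordinate
    (hMarkov : ∀ n : ℕ,
      Measure.map (fun a => ((fun i : Fin (n + 1) => X i a), X (n + 1) a)) μ
        = (Measure.map (fun a => fun i : Fin (n + 1) => X i a) μ)
            ⊗ₘ (κ.comap (fun s : Fin (n + 1) → S => s (Fin.last n)) (measurable_pi_apply _)))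
    -- reversibility: `(X 0, ..., X k)` has the same joint law as `(X k, ..., X 0)`
    (hrev : ∀ k : ℕ,
      Measure.map (fun a => fun i : Fin (k + 1) => X (i : ℕ) a) μ
        = Measure.map (fun a => fun i : Fin (k + 1) => X (k - (i : ℕ)) a) μ)
    (ω : S → ℝ) (hω : Measurable ω)
    (k : ℕ) (ε : ℝ) (hε0 : 0 ≤ ε) (hε1 : ε ≤ 1) :
    μ {a | (((Finset.range (k + 1)).filter (fun i => ω (X i a) ≤ ω (X 0 a))).card : ℝ)
        ≤ ε * (k + 1)}
      ≤ ENNReal.ofReal (Real.sqrt (2 * ε)) := by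
  classical
  set c : ℝ := ε * (k + 1) with hc
  have hc0 : 0 ≤ c := by positivity
  let A : Set (Fin (k + 1) → S) :=
    {x | (∑ i : Fin (k + 1), if ω (x i) ≤ ω (x 0) then (1 : ℝ) else 0) ≤ c}
  have hA : MeasurableSet A := by
    refine measurableSet_le (Finset.measurable_sum _ fun i _ => ?_) measurable_const
    refine Measurable.ite (measurableSet_le ?_ ?_) measurable_const measurable_const
    · exact hω.comp (measurable_pi_apply _)
    · exact hω.comp (measurable_pi_apply _)
  have memA : ∀ u : ℕ → S, (fun i : Fin (k + 1) => u i) ∈ A ↔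
      (((Finset.range (k + 1)).filter (fun i => ω (u i) ≤ ω (u 0))).card : ℝ) ≤ c := by
    intro u
    rw [Finset.card_filter]
    push_cast
    rw [← Fin.sum_univ_eq_sum_range (fun i => if ω (u i) ≤ ω (u 0) then (1 : ℝ) else 0)]
    rfl
  let g : (Fin (k + 1) → S) → ℝ≥0∞ := A.indicator 1
  have hg : Measurable g := measurable_one.indicator hA
  obtain ⟨h, hh, H⟩ := exists_forward μ X hXmeas κ hMarkov k g hg
  have hpath : ∀ N : ℕ, Measurable (fun a => fun i : Fin (N + 1) => X i a) :=
    fun N => measurable_pi_iff.2 fun i => hXmeas i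
  set E : Set Ω := {a | (((Finset.range (k + 1)).filter
    (fun i => ω (X i a) ≤ ω (X 0 a))).card : ℝ) ≤ c} with hE
  have hEA : E = (fun a => fun i : Fin (k + 1) => X i a) ⁻¹' A := by
    ext a
    exact (memA (fun i => X i a)).symm
  have hp : μ E = ∫⁻ a, h (X 0 a) ∂μ := by
    have := H 0 (fun _ => 1) measurable_const
    simp only [one_mul, zero_add] at this
    rw [← this, hEA, ← lintegral_indicator_one (hpath k hA)]
    rfl
  -- the key identity
  have key : ∀ n, k ≤ n →
      ∫⁻ a, g (fun i => X (n - i) a) * g (fun i => X (n + i) a) ∂μ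
        = ∫⁻ a, h (X 0 a) * h (X 0 a) ∂μ := by
    intro n hn
    let r : (Fin (n + 1) → S) → (Fin (k + 1) → S) := fun x i => x ⟨n - i, by omega⟩
    have hr : Measurable r := measurable_pi_iff.2 fun i => measurable_pi_apply _
    have e1 := H n (fun x => g (r x)) (hg.comp hr)
    have hK : Measurable (fun x : Fin (n + 1) → S => g (r x) * h (x (Fin.last n))) :=
      (hg.comp hr).mul (hh.comp (measurable_pi_apply _))
    have hpath' : Measurable (fun a => fun i : Fin (n + 1) => X (n - (i : ℕ)) a) :=
      measurable_pi_iff.2 fun i => hXmeas _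
    have e2 := lintegral_map (μ := μ) hK (hpath n)
    have e3 := lintegral_map (μ := μ) hK hpath'
    rw [hrev n] at e2
    have e4 := H 0 (fun x => h (x 0)) (hh.comp (measurable_pi_apply _))
    refine e1.trans (e2.symm.trans (e3.trans (Eq.trans ?_ e4)))
    refine lintegral_congr fun a => ?_
    rw [mul_comm]
    congr 1
    · simp
    · congr 1
      funext i
      have : n - (n - (i : ℕ)) = 0 + i := by omega
      simp only [r]
      rw [this]
  have hsq : (μ E) ^ 2 ≤ ∫⁻ a, h (X 0 a) * h (X 0 a) ∂μ := by
    rw [hp]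
    exact sq_lintegral_le μ _ (hh.comp (hXmeas 0))
  have hm : ∀ n, Measurable
      (fun a => g (fun i => X (n - i) a) * g (fun i => X (n + i) a)) := fun n =>
    (hg.comp (measurable_pi_iff.2 fun i => hXmeas _)).mul
      (hg.comp (measurable_pi_iff.2 fun i => hXmeas _))
  have hpt : ∀ a, ∑ n ∈ Finset.Icc k (2 * k),
      g (fun i => X (n - i) a) * g (fun i => X (n + i) a) ≤ ENNReal.ofReal (2 * c) := by
    intro a
    let T : Finset ℕ := (Finset.Icc k (2 * k)).filter (fun n =>
      (fun i : Fin (k + 1) => X (n - i) a) ∈ A ∧ (fun i : Fin (k + 1) => X (n + i) a) ∈ A)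
    have hsum : ∑ n ∈ Finset.Icc k (2 * k),
        g (fun i => X (n - i) a) * g (fun i => X (n + i) a) = (T.card : ℝ≥0∞) := by
      rw [Finset.card_filter]
      push_cast
      refine Finset.sum_congr rfl fun n _ => ?_
      simp only [g, Set.indicator_apply, Pi.one_apply]
      split_ifs <;> simp_all
    rw [hsum, ← ENNReal.ofReal_natCast]
    refine ENNReal.ofReal_le_ofReal ?_
    refine comb_bound (fun i => ω (X i a)) k c hc0 T (Finset.filter_subset _ _) ?_ ?_
    · intro n hn
      have := (memA (fun i => X (n - i) a)).1 (Finset.mem_filter.1 hn).2.1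
      convert this using 4
      exact Iff.rfl
    · intro n hn
      have := (memA (fun i => X (n + i) a)).1 (Finset.mem_filter.1 hn).2.2
      convert this using 4
      exact Iff.rfl
  have hfin : ((k + 1 : ℕ) : ℝ≥0∞) * (μ E) ^ 2 ≤ ENNReal.ofReal (2 * c) := by
    calc ((k + 1 : ℕ) : ℝ≥0∞) * (μ E) ^ 2
        = ∑ n ∈ Finset.Icc k (2 * k), (μ E) ^ 2 := by
          rw [Finset.sum_const, Nat.card_Icc, nsmul_eq_mul]
          congr 2
          omega
      _ ≤ ∑ n ∈ Finset.Icc k (2 * k),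
          ∫⁻ a, g (fun i => X (n - i) a) * g (fun i => X (n + i) a) ∂μ := by
          refine Finset.sum_le_sum fun n hn => ?_
          rw [key n (Finset.mem_Icc.1 hn).1]
          exact hsq
      _ = ∫⁻ a, ∑ n ∈ Finset.Icc k (2 * k),
          g (fun i => X (n - i) a) * g (fun i => X (n + i) a) ∂μ :=
          (lintegral_finsetSum _ fun n _ => hm n).symm
      _ ≤ ∫⁻ a, ENNReal.ofReal (2 * c) ∂μ := lintegral_mono hpt
      _ = ENNReal.ofReal (2 * c) := by simp
  have hE' : μ E = ENNReal.ofReal (μ.real E) := (ENNReal.ofReal_toReal (measure_ne_top μ E)).symm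
  have hn0 : 0 ≤ μ.real E := measureReal_nonneg
  rw [hE'] at hfin ⊢
  rw [← ENNReal.ofReal_pow hn0, ← ENNReal.ofReal_natCast, ← ENNReal.ofReal_mul (by positivity),
    ENNReal.ofReal_le_ofReal_iff (by positivity)] at hfin
  refine ENNReal.ofReal_le_ofReal (Real.le_sqrt_of_sq_le ?_)
  push_cast at hfin
  have hk : (0 : ℝ) < k + 1 := by positivity
  refine le_of_mul_le_mul_left ?_ hk
  rw [hc] at hfin
  linarith
end

section
/- Let M = X_0, X_1, X_2, ... be a time-homogeneous Markov chain on a measurable state space S with transition kernel κ, let π be a stationary distribution for κ with respect to which κ is reversible, and let ω : S → ℝ be a measurable label function. If the total variation distance between the distribution of X_0 and π is at most ε_1, then for any fixed k ∈ ℕ and any ε ∈ [0,1], the probability that ω(X_0) is an ε-outlier among ω(X_0), ω(X_1), ..., ω(X_k) is at most √(2ε) + ε_1. -/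
open MeasureTheory ProbabilityTheory Finset
open scoped ENNReal

namespace SqrtEps

variable {S : Type*} [MeasurableSpace S]

/-- Prepend a state to a path. -/
def pcons (s : S) (z : ℕ → S) : ℕ → S := fun i => Nat.casesOn i s z

lemma measurable_pcons : Measurable (fun p : S × (ℕ → S) => pcons p.1 p.2) := by
  refine measurable_pi_iff.2 fun i => ?_
  cases i with
  | zero => exact measurable_fst
  | succ n => exact (measurable_pi_apply n).comp measurable_snd

lemma measurable_const_path : Measurable (fun (s : S) (_ : ℕ) => s) :=
  measurable_pi_iff.2 fun _ => measurable_id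

/-- Law of the path `s, X 1, ..., X n, X n, X n, ...` of the chain started at `s`. -/
noncomputable def Q (κ : Kernel S S) : ℕ → Kernel S (ℕ → S)
  | 0 => Kernel.deterministic (fun s _ => s) measurable_const_path
  | n + 1 => (Kernel.id ×ₖ (Q κ n ∘ₖ κ)).map (fun p => pcons p.1 p.2)

instance instQ (κ : Kernel S S) [IsMarkovKernel κ] (n : ℕ) : IsMarkovKernel (Q κ n) := by
  induction n with
  | zero => unfold Q; infer_instance
  | succ n ih => unfold Q; exact Kernel.IsMarkovKernel.map _ measurable_pcons

variable (κ : Kernel S S) [IsMarkovKernel κ]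

lemma lintegral_Q_zero (s : S) {F : (ℕ → S) → ℝ≥0∞} (hF : Measurable F) :
    ∫⁻ z, F z ∂(Q κ 0 s) = F (fun _ => s) := by
  simp only [Q]
  rw [Kernel.deterministic_apply, lintegral_dirac' _ hF]

lemma lintegral_Q_succ (n : ℕ) (s : S) {F : (ℕ → S) → ℝ≥0∞} (hF : Measurable F) :
    ∫⁻ z, F z ∂(Q κ (n + 1) s) = ∫⁻ y, ∫⁻ z, F (pcons s z) ∂(Q κ n y) ∂(κ s) := by
  have hF' : Measurable (fun p : S × (ℕ → S) => F (pcons p.1 p.2)) := hF.comp measurable_pcons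
  have h1 : Measurable (fun z => F (pcons s z)) := hF'.comp measurable_prodMk_left
  simp only [Q]
  rw [Kernel.lintegral_map _ measurable_pcons _ hF, Kernel.lintegral_prod _ _ _ hF',
    Kernel.lintegral_id' , Kernel.lintegral_comp _ _ _ h1]
  exact hF'.lintegral_kernel_prod_right' (κ := Kernel.const S ((Q κ n ∘ₖ κ) s))

/-- Overwrite the first state. -/
def sh (s : S) (z : ℕ → S) : ℕ → S := pcons s (fun i => z (i + 1))

lemma measurable_sh (s : S) : Measurable (sh s) := by
  refine measurable_pcons.comp (measurable_const.prodMk ?_)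
  exact measurable_pi_iff.2 fun i => measurable_pi_apply (i + 1)

lemma lintegral_sh (n : ℕ) (s : S) {F : (ℕ → S) → ℝ≥0∞} (hF : Measurable F) :
    ∫⁻ z, F z ∂(Q κ n s) = ∫⁻ z, F (sh s z) ∂(Q κ n s) := by
  have h : Measurable (fun z => F (sh s z)) := hF.comp (measurable_sh s)
  cases n with
  | zero =>
    rw [lintegral_Q_zero κ s hF, lintegral_Q_zero κ s h]
    congr 1
    ext i; cases i <;> rfl
  | succ n =>
    rw [lintegral_Q_succ κ n s hF, lintegral_Q_succ κ n s h]
    rfl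

/-- Freeze a path after time `n`. -/
def trunc (n : ℕ) (z : ℕ → S) : ℕ → S := fun i => z (min i n)

lemma measurable_trunc (n : ℕ) : Measurable (trunc (S := S) n) :=
  measurable_pi_iff.2 fun i => measurable_pi_apply (min i n)

lemma lintegral_trunc (n : ℕ) (s : S) {F : (ℕ → S) → ℝ≥0∞} (hF : Measurable F) :
    ∫⁻ z, F (trunc n z) ∂(Q κ (n + 1) s) = ∫⁻ z, F z ∂(Q κ n s) := by
  induction n generalizing s F with
  | zero =>
    rw [lintegral_Q_zero κ s hF,
      lintegral_Q_succ κ 0 s (F := fun z => F (trunc 0 z)) (hF.comp (measurable_trunc 0))]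
    have : ∀ z : ℕ → S, trunc 0 (pcons s z) = fun _ => s := by
      intro z; ext i; simp [trunc, pcons]
    simp [this]
  | succ n ih =>
    rw [lintegral_Q_succ κ n s hF, lintegral_Q_succ κ (n + 1) s
      (F := fun z => F (trunc (n + 1) z)) (hF.comp (measurable_trunc _))]
    have : ∀ z : ℕ → S, trunc (n + 1) (pcons s z) = pcons s (trunc n z) := by
      intro z; ext i; cases i with
      | zero => simp [trunc, pcons]
      | succ i => simp [trunc, pcons, Nat.succ_min_succ]
    simp only [this]
    refine lintegral_congr fun y => ?_
    exact ih y (F := fun z => F (pcons s z)) (hF.comp (measurable_pcons.comp measurable_prodMk_left))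

section count

variable (ω : S → ℝ) (t : ℝ)

/-- Rank of the initial state among the first `n + 1` states. -/
noncomputable def cnt (n : ℕ) (z : ℕ → S) : ℕ :=
  ((Finset.range (n + 1)).filter (fun i => ω (z i) ≤ ω (z 0))).card

open Classical in
/-- Indicator of the outlier event. -/
noncomputable def out (n : ℕ) (z : ℕ → S) : ℝ≥0∞ := if (cnt ω n z : ℝ) ≤ t then 1 else 0

variable {ω} in
lemma measurable_cnt (hω : Measurable ω) (n : ℕ) : Measurable (cnt ω n) := by
  have : cnt ω n = fun z => ∑ i ∈ Finset.range (n + 1), if ω (z i) ≤ ω (z 0) then 1 else 0 := by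
    ext z; simp only [cnt, Finset.card_filter]
  rw [this]
  refine Finset.measurable_sum _ fun i _ => ?_
  refine Measurable.ite ?_ measurable_const measurable_const
  exact measurableSet_le (hω.comp (measurable_pi_apply i)) (hω.comp (measurable_pi_apply 0))

variable {ω} in
lemma measurable_out (hω : Measurable ω) (n : ℕ) : Measurable (out ω t n) := by
  unfold out
  refine Measurable.ite ?_ measurable_const measurable_const
  exact (measurable_cnt hω n) (t := {m : ℕ | (m : ℝ) ≤ t}) (by measurability)

lemma out_le_one (n : ℕ) (z : ℕ → S) : out ω t n z ≤ 1 := by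
  unfold out; split_ifs <;> simp

lemma cnt_congr {n : ℕ} {z z' : ℕ → S} (h : ∀ i ≤ n, z i = z' i) : cnt ω n z = cnt ω n z' := by
  unfold cnt
  congr 1
  refine Finset.filter_congr fun i hi => ?_
  rw [h i (by simpa [Nat.lt_succ_iff] using hi), h 0 (Nat.zero_le _)]

lemma out_congr {n : ℕ} {z z' : ℕ → S} (h : ∀ i ≤ n, z i = z' i) : out ω t n z = out ω t n z' := by
  unfold out; rw [cnt_congr ω h]

lemma out_succ_le (n : ℕ) (z : ℕ → S) : out ω t (n + 1) z ≤ out ω t n z := by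
  have : cnt ω n z ≤ cnt ω (n + 1) z := by
    unfold cnt
    exact Finset.card_le_card (Finset.filter_subset_filter _ (Finset.range_mono (by omega)))
  have h' : (cnt ω n z : ℝ) ≤ cnt ω (n + 1) z := by exact_mod_cast this
  unfold out
  split_ifs with h1 h2 <;> first | exact le_rfl | exact zero_le | (exfalso; linarith)

/-- Outlier probability from `s` over `n` steps. -/
noncomputable def fo (n : ℕ) (s : S) : ℝ≥0∞ := ∫⁻ z, out ω t n z ∂(Q κ n s)

variable {ω} in
lemma fo_anti (hω : Measurable ω) {m n : ℕ} (h : m ≤ n) (s : S) : fo κ ω t n s ≤ fo κ ω t m s := by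
  induction n, h using Nat.le_induction with
  | base => exact le_rfl
  | succ n _ ih =>
    refine le_trans ?_ ih
    unfold fo
    rw [← lintegral_trunc κ n s (measurable_out t hω n)]
    refine lintegral_mono fun z => (out_succ_le ω t n z).trans (le_of_eq ?_)
    exact out_congr ω t fun i hi => by simp [trunc, hi]

lemma fo_le_one (n : ℕ) (s : S) : fo κ ω t n s ≤ 1 := by
  unfold fo
  calc _ ≤ ∫⁻ z, 1 ∂(Q κ n s) := lintegral_mono (out_le_one ω t n)
    _ = 1 := by simp

variable {ω} in
lemma measurable_fo (hω : Measurable ω) (n : ℕ) : Measurable (fo κ ω t n) :=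
  (measurable_out t hω n).lintegral_kernel

/-- The event that time `j` is an outlier in both directions. -/
noncomputable def bo (k j : ℕ) (w : ℕ → S) : ℝ≥0∞ :=
  out ω t j (fun i => w (j - i)) * out ω t (k - j) (fun i => w (j + i))

variable {ω} in
lemma measurable_bo (hω : Measurable ω) (k j : ℕ) : Measurable (bo (S := S) ω t k j) := by
  unfold bo
  refine Measurable.mul ?_ ?_
  · exact (measurable_out t hω _).comp (measurable_pi_iff.2 fun i => measurable_pi_apply _)
  · exact (measurable_out t hω _).comp (measurable_pi_iff.2 fun i => measurable_pi_apply _)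

lemma sum_bo_le (ht : 0 ≤ t) (k : ℕ) (w : ℕ → S) :
    ∑ j ∈ Finset.range (k + 1), bo ω t k j w ≤ ENNReal.ofReal (2 * t) := by
  classical
  set J := (Finset.range (k + 1)).filter (fun j => (cnt ω j (fun i => w (j - i)) : ℝ) ≤ t ∧
    (cnt ω (k - j) (fun i => w (j + i)) : ℝ) ≤ t) with hJ
  have h1 : ∑ j ∈ Finset.range (k + 1), bo ω t k j w = (J.card : ℝ≥0∞) := by
    rw [hJ, Finset.card_filter, Nat.cast_sum]
    refine Finset.sum_congr rfl fun j _ => ?_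
    unfold bo out
    split_ifs <;> simp_all
  rw [h1]
  have h2 : (J.card : ℝ) ≤ 2 * t := by
    rcases J.eq_empty_or_nonempty with h | h
    · rw [h]; simp; exact ht
    · obtain ⟨j, hj, hmax⟩ := J.exists_max_image (fun i => ω (w i)) h
      have hj' := hj
      rw [hJ, Finset.mem_filter] at hj'
      obtain ⟨hjk, ha, hb⟩ := hj'
      have hjk : j ≤ k := by simpa [Nat.lt_succ_iff] using hjk
      have hsub : J ⊆
          ((Finset.range (j + 1)).filter (fun i => ω (w (j - i)) ≤ ω (w (j - 0)))).image
            (fun i => j - i) ∪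
          ((Finset.range (k - j + 1)).filter (fun i => ω (w (j + i)) ≤ ω (w (j + 0)))).image
            (fun i => j + i) := by
        intro i hi
        have hm := hmax i hi
        have hik : i ≤ k := by
          have := (Finset.mem_filter.1 hi).1
          simpa [Nat.lt_succ_iff] using this
        rw [Finset.mem_union, Finset.mem_image, Finset.mem_image]
        rcases le_total i j with hij | hij
        · left
          refine ⟨j - i, ?_, by omega⟩
          rw [Finset.mem_filter, Finset.mem_range]
          refine ⟨by omega, ?_⟩
          rw [show j - (j - i) = i by omega]; simpa using hm
        · right
          refine ⟨i - j, ?_, by omega⟩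
          rw [Finset.mem_filter, Finset.mem_range]
          refine ⟨by omega, ?_⟩
          rw [show j + (i - j) = i by omega]; simpa using hm
      have hc : J.card ≤ cnt ω j (fun i => w (j - i)) + cnt ω (k - j) (fun i => w (j + i)) :=
        (Finset.card_le_card hsub).trans <| (Finset.card_union_le _ _).trans
          (add_le_add Finset.card_image_le Finset.card_image_le)
      have : (J.card : ℝ) ≤ cnt ω j (fun i => w (j - i)) + cnt ω (k - j) (fun i => w (j + i)) := by
        exact_mod_cast hc
      linarith
  rw [← ENNReal.ofReal_natCast]
  exact ENNReal.ofReal_le_ofReal h2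

end count

/-- Assemble a two-sided path. -/
def asm (a : ℕ) (p : (ℕ → S) × (ℕ → S)) : ℕ → S :=
  fun i => if i < a then p.1 (a - i) else p.2 (i - a)

lemma measurable_asm (a : ℕ) : Measurable (asm (S := S) a) := by
  refine measurable_pi_iff.2 fun i => ?_
  unfold asm
  split_ifs
  · exact (measurable_pi_apply _).comp measurable_fst
  · exact (measurable_pi_apply _).comp measurable_snd

variable (π : Measure S) [IsProbabilityMeasure π]

/-- Two-sided integral. -/
noncomputable def R (a b : ℕ) (F : (ℕ → S) × (ℕ → S) → ℝ≥0∞) : ℝ≥0∞ :=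
  ∫⁻ s, ∫⁻ y, ∫⁻ z, F (y, z) ∂(Q κ b s) ∂(Q κ a s) ∂π

lemma lintegral_sh2 (a b : ℕ) (s : S) {F : (ℕ → S) × (ℕ → S) → ℝ≥0∞} (hF : Measurable F) :
    ∫⁻ y, ∫⁻ z, F (y, z) ∂(Q κ b s) ∂(Q κ a s)
      = ∫⁻ y, ∫⁻ z, F (sh s y, sh s z) ∂(Q κ b s) ∂(Q κ a s) := by
  rw [lintegral_sh κ a s (F := fun y => ∫⁻ z, F (y, z) ∂(Q κ b s)) hF.lintegral_prod_right']
  refine lintegral_congr fun y => ?_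
  exact lintegral_sh κ b s (F := fun z => F (sh s y, z)) (hF.comp measurable_prodMk_left)

lemma R_shift (hrev : (π ⊗ₘ κ).map Prod.swap = π ⊗ₘ κ) (a b : ℕ)
    {G : (ℕ → S) → ℝ≥0∞} (hG : Measurable G) :
    R κ π (a + 1) b (G ∘ asm (a + 1)) = R κ π a (b + 1) (G ∘ asm a) := by
  have hF1 : Measurable (G ∘ asm (a + 1)) := hG.comp (measurable_asm _)
  have hF0 : Measurable (G ∘ asm a) := hG.comp (measurable_asm _)
  -- the integrand after expanding one step
  let P : (ℕ → S) × (ℕ → S) → ℝ≥0∞ := fun p => G (asm (a + 1) (pcons (p.2 0) p.1, p.2))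
  have hasm : ∀ (s : S) (y z : ℕ → S),
      asm (a + 1) (pcons s y, z) = asm (a + 1) (pcons (z 0) y, z) := by
    intro s y z
    ext i
    unfold asm
    split_ifs with h
    · obtain ⟨m, hm⟩ : ∃ m, a + 1 - i = m + 1 := ⟨a - i, by omega⟩
      simp only [hm, pcons]
    · rfl
  have hP : Measurable P := by
    have h0 : Measurable (fun p : (ℕ → S) × (ℕ → S) => p.2 0) :=
      (measurable_pi_apply 0).comp measurable_snd
    have h1 : Measurable (fun p : (ℕ → S) × (ℕ → S) => pcons (p.2 0) p.1) :=
      measurable_pcons.comp (h0.prodMk measurable_fst)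
    exact hF1.comp (h1.prodMk measurable_snd)
  let H : S × S → ℝ≥0∞ := fun p => ∫⁻ y, ∫⁻ z, P (y, z) ∂(Q κ b p.1) ∂(Q κ a p.2)
  have hH : Measurable H := by
    have h1 : Measurable (fun q : (S × S) × (ℕ → S) => ∫⁻ z, P (q.2, z) ∂(Q κ b q.1.1)) := by
      have m1 : Measurable (fun q : (S × S) × (ℕ → S) => q.1.1) :=
        measurable_fst.comp measurable_fst
      have m2 : Measurable (fun r : ((S × S) × (ℕ → S)) × (ℕ → S) => (r.1.2, r.2)) :=
        (measurable_snd.comp measurable_fst).prodMk measurable_snd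
      have := Measurable.lintegral_kernel_prod_right'
        (κ := (Q κ b).comap (fun q : (S × S) × (ℕ → S) => q.1.1) m1)
        (f := fun r => P (r.1.2, r.2)) (hP.comp m2)
      simpa [Kernel.comap_apply] using this
    have := Measurable.lintegral_kernel_prod_right'
        (κ := (Q κ a).comap (fun q : S × S => q.2) measurable_snd) h1
    simpa [Kernel.comap_apply] using this
  have hswap : ∫⁻ s, ∫⁻ s', H (s, s') ∂(κ s) ∂π = ∫⁻ s, ∫⁻ s', H (s', s) ∂(κ s) ∂π := by
    rw [← Measure.lintegral_compProd hH, ← hrev, lintegral_map hH measurable_swap]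
    exact Measure.lintegral_compProd (f := fun p => H p.swap) (hH.comp measurable_swap)
  have hL : R κ π (a + 1) b (G ∘ asm (a + 1)) = ∫⁻ s, ∫⁻ s', H (s, s') ∂(κ s) ∂π := by
    unfold R
    refine lintegral_congr fun s => ?_
    rw [lintegral_Q_succ κ a s (F := fun y => ∫⁻ z, (G ∘ asm (a + 1)) (y, z) ∂(Q κ b s))
      hF1.lintegral_prod_right']
    refine lintegral_congr fun s' => ?_
    refine lintegral_congr fun y => ?_
    refine lintegral_congr fun z => ?_
    simp only [Function.comp, P]
    rw [hasm]
  have hRt : R κ π a (b + 1) (G ∘ asm a) = ∫⁻ s, ∫⁻ s', H (s', s) ∂(κ s) ∂π := by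
    unfold R
    refine lintegral_congr fun s => ?_
    have e1 : ∀ y, ∫⁻ z, (G ∘ asm a) (y, z) ∂(Q κ (b + 1) s)
        = ∫⁻ s', ∫⁻ z, (G ∘ asm a) (y, pcons s z) ∂(Q κ b s') ∂(κ s) := fun y =>
      lintegral_Q_succ κ b s (F := fun z => (G ∘ asm a) (y, z)) (hF0.comp measurable_prodMk_left)
    rw [lintegral_sh κ a s (F := fun y => ∫⁻ z, (G ∘ asm a) (y, z) ∂(Q κ (b + 1) s))
      hF0.lintegral_prod_right']
    simp only [e1]
    have e2 : ∀ s', H (s', s) = ∫⁻ y, ∫⁻ z, P (sh s y, z) ∂(Q κ b s') ∂(Q κ a s) := fun s' =>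
      lintegral_sh κ a s (F := fun y => ∫⁻ z, P (y, z) ∂(Q κ b s')) hP.lintegral_prod_right'
    simp only [e2]
    symm
    rw [lintegral_lintegral_swap]
    · refine lintegral_congr fun y => ?_
      refine lintegral_congr fun s' => ?_
      refine lintegral_congr fun z => ?_
      simp only [Function.comp, P]
      congr 1
      ext i
      unfold asm
      rcases lt_trichotomy i a with h | h | h
      · obtain ⟨m, hm⟩ : ∃ m, a - i = m := ⟨a - i, rfl⟩
        have h2 : a + 1 - i = m + 1 := by omega
        simp [h, Nat.lt_succ_of_lt h, h2, hm, pcons]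
      · subst h
        simp [pcons, sh]
      · obtain ⟨m, rfl⟩ : ∃ m, i = a + 1 + m := ⟨i - (a + 1), by omega⟩
        have h2 : a + 1 + m - a = m + 1 := by omega
        have h3 : ¬ (a + 1 + m < a) := by omega
        have h4 : ¬ (a + 1 + m < a + 1) := by omega
        have h5 : a + 1 + m - (a + 1) = m := by omega
        simp only [h2, h3, h4, h5, if_false, pcons]
    · apply Measurable.aemeasurable
      have := Measurable.lintegral_kernel_prod_right'
        (κ := (Q κ b).comap (fun q : S × (ℕ → S) => q.1) measurable_fst)
        (f := fun r => P (sh s r.1.2, r.2))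
        (hP.comp (((measurable_sh s).comp (measurable_snd.comp measurable_fst)).prodMk
          measurable_snd))
      simpa [Kernel.comap_apply, Function.uncurry_def] using this
  rw [hL, hRt, hswap]

lemma R_eq (hrev : (π ⊗ₘ κ).map Prod.swap = π ⊗ₘ κ) (a b : ℕ)
    {G : (ℕ → S) → ℝ≥0∞} (hG : Measurable G) :
    R κ π a b (G ∘ asm a) = ∫⁻ s, ∫⁻ z, G z ∂(Q κ (a + b) s) ∂π := by
  induction a generalizing b with
  | zero =>
    unfold R
    have : ∀ p : (ℕ → S) × (ℕ → S), asm 0 p = p.2 := by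
      intro p; ext i; simp [asm]
    simp [this]
  | succ a ih => rw [R_shift κ π hrev a b hG, ih (b + 1), show a + (b + 1) = a + 1 + b by omega]

lemma R_bo {ω : S → ℝ} (hω : Measurable ω) (t : ℝ) {k j : ℕ} (_hj : j ≤ k) :
    R κ π j (k - j) (bo ω t k j ∘ asm j) = ∫⁻ s, fo κ ω t j s * fo κ ω t (k - j) s ∂π := by
  unfold R
  refine lintegral_congr fun s => ?_
  have hF : Measurable (fun p : (ℕ → S) × (ℕ → S) => out ω t j p.1 * out ω t (k - j) p.2) :=
    ((measurable_out t hω j).comp measurable_fst).mul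
      ((measurable_out t hω (k - j)).comp measurable_snd)
  have e : fo κ ω t j s * fo κ ω t (k - j) s
      = ∫⁻ y, ∫⁻ z, out ω t j y * out ω t (k - j) z ∂(Q κ (k - j) s) ∂(Q κ j s) := by
    unfold fo
    rw [← lintegral_mul_const _ (measurable_out t hω j)]
    refine lintegral_congr fun y => ?_
    rw [lintegral_const_mul _ (measurable_out t hω (k - j))]
  rw [e, lintegral_sh2 κ j (k - j) s hF,
    lintegral_sh2 κ j (k - j) s ((measurable_bo t hω k j).comp (measurable_asm j))]
  refine lintegral_congr fun y => ?_
  refine lintegral_congr fun z => ?_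
  simp only [Function.comp, bo]
  congr 1
  · refine out_congr ω t fun i hi => ?_
    unfold asm
    rcases Nat.eq_zero_or_pos i with h | h
    · subst h; simp [sh, pcons]
    · rw [if_pos (by omega)]
      simp [show j - (j - i) = i by omega]
  · refine out_congr ω t fun i hi => ?_
    simp [asm]

lemma sq_le {ω : S → ℝ} (hω : Measurable ω) (hrev : (π ⊗ₘ κ).map Prod.swap = π ⊗ₘ κ)
    (t : ℝ) (ht : 0 ≤ t) (k : ℕ) :
    ((k : ℝ≥0∞) + 1) * ∫⁻ s, fo κ ω t k s ^ 2 ∂π ≤ ENNReal.ofReal (2 * t) := by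
  calc ((k : ℝ≥0∞) + 1) * ∫⁻ s, fo κ ω t k s ^ 2 ∂π
      = ∑ j ∈ Finset.range (k + 1), ∫⁻ s, fo κ ω t k s ^ 2 ∂π := by simp
    _ ≤ ∑ j ∈ Finset.range (k + 1), ∫⁻ s, ∫⁻ z, bo ω t k j z ∂(Q κ k s) ∂π := by
        refine Finset.sum_le_sum fun j hj => ?_
        have hj : j ≤ k := by simpa [Nat.lt_succ_iff] using hj
        have := R_eq κ π hrev j (k - j) (measurable_bo t hω k j)
        rw [show j + (k - j) = k by omega, R_bo κ π hω t hj] at this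
        rw [← this]
        refine lintegral_mono fun s => ?_
        rw [sq]
        exact mul_le_mul' (fo_anti κ t hω hj s) (fo_anti κ t hω (Nat.sub_le _ _) s)
    _ = ∫⁻ s, ∫⁻ z, ∑ j ∈ Finset.range (k + 1), bo ω t k j z ∂(Q κ k s) ∂π := by
        rw [← lintegral_finsetSum _ fun j _ => (measurable_bo t hω k j).lintegral_kernel]
        refine lintegral_congr fun s => ?_
        rw [lintegral_finsetSum _ fun j _ => measurable_bo t hω k j]
    _ ≤ ∫⁻ s, ∫⁻ z, ENNReal.ofReal (2 * t) ∂(Q κ k s) ∂π :=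
        lintegral_mono fun s => lintegral_mono fun z => sum_bo_le ω t ht k z
    _ = ENNReal.ofReal (2 * t) := by simp

lemma lintegral_le_one_of {f : S → ℝ≥0∞} (h1 : ∀ s, f s ≤ 1) : ∫⁻ s, f s ∂π ≤ 1 := by
  calc _ ≤ ∫⁻ s, 1 ∂π := lintegral_mono h1
    _ = 1 := by simp

lemma jensen {f : S → ℝ≥0∞} (hf : Measurable f) (h1 : ∀ s, f s ≤ 1) :
    (∫⁻ s, f s ∂π) ^ 2 ≤ ∫⁻ s, f s ^ 2 ∂π := by
  set q := ∫⁻ s, f s ∂π with hq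
  have hq1 : q ≤ 1 := lintegral_le_one_of π h1
  have hqt : q ^ 2 ≠ ⊤ := ENNReal.pow_ne_top (ne_top_of_le_ne_top ENNReal.one_ne_top hq1)
  have hpt : ∀ s, 2 * q * f s ≤ f s ^ 2 + q ^ 2 := by
    intro s
    have hfs : f s ≠ ⊤ := ne_top_of_le_ne_top ENNReal.one_ne_top (h1 s)
    have hqs : q ≠ ⊤ := ne_top_of_le_ne_top ENNReal.one_ne_top hq1
    rw [← ENNReal.coe_toNNReal hfs, ← ENNReal.coe_toNNReal hqs]
    have := two_mul_le_add_sq q.toNNReal (f s).toNNReal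
    rw [add_comm] at this
    exact_mod_cast this
  have h : 2 * q * q ≤ ∫⁻ s, f s ^ 2 ∂π + q ^ 2 := by
    calc 2 * q * q = ∫⁻ s, 2 * q * f s ∂π := by rw [lintegral_const_mul _ hf]
      _ ≤ ∫⁻ s, (f s ^ 2 + q ^ 2) ∂π := lintegral_mono hpt
      _ = _ := by rw [lintegral_add_right _ measurable_const]; simp
  have h' : q ^ 2 + q ^ 2 ≤ ∫⁻ s, f s ^ 2 ∂π + q ^ 2 := by
    convert h using 1; ring
  exact (ENNReal.add_le_add_iff_right hqt).1 h'

lemma stat_le {ω : S → ℝ} (hω : Measurable ω) (hrev : (π ⊗ₘ κ).map Prod.swap = π ⊗ₘ κ)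
    (ε : ℝ) (hε : 0 ≤ ε) (k : ℕ) :
    ∫⁻ s, fo κ ω (ε * (k + 1)) k s ∂π ≤ ENNReal.ofReal (Real.sqrt (2 * ε)) := by
  set t : ℝ := ε * (k + 1) with ht
  have ht0 : 0 ≤ t := by positivity
  have h1 := sq_le κ π hω hrev t ht0 k
  have h2 := jensen π (measurable_fo κ t hω k) (fo_le_one κ ω t k)
  have h3 : (∫⁻ s, fo κ ω t k s ∂π) ^ 2 ≤ ENNReal.ofReal (2 * ε) := by
    have h4 : ((k : ℝ≥0∞) + 1) * (∫⁻ s, fo κ ω t k s ∂π) ^ 2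
        ≤ ((k : ℝ≥0∞) + 1) * ENNReal.ofReal (2 * ε) := by
      refine (mul_le_mul' le_rfl h2).trans (h1.trans (le_of_eq ?_))
      have : ((k : ℝ≥0∞) + 1) = ENNReal.ofReal ((k : ℝ) + 1) := by
        rw [ENNReal.ofReal_add (by positivity) zero_le_one]; simp
      rw [this, ← ENNReal.ofReal_mul (by positivity), ht]
      congr 1; ring
    exact (ENNReal.mul_le_mul_iff_right (by simp) (by finiteness)).1 h4
  have h5 : ENNReal.ofReal (2 * ε) = ENNReal.ofReal (Real.sqrt (2 * ε)) ^ 2 := by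
    rw [← ENNReal.ofReal_pow (Real.sqrt_nonneg _), Real.sq_sqrt (by positivity)]
  rw [h5] at h3
  exact (ENNReal.pow_le_pow_left_iff two_ne_zero).1 h3

lemma tv_le (ν : Measure S) [IsProbabilityMeasure ν] (ε₁ : ℝ)
    (htv : ∀ E : Set S, MeasurableSet E → |(ν E).toReal - (π E).toReal| ≤ ε₁)
    {f : S → ℝ≥0∞} (hf : Measurable f) (h1 : ∀ s, f s ≤ 1) :
    ∫⁻ s, f s ∂ν ≤ ∫⁻ s, f s ∂π + ENNReal.ofReal ε₁ := by
  have hlc : ∀ (ρ : Measure S), ∫⁻ s, f s ∂ρ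
      = ∫⁻ x in Set.Ioc (0 : ℝ) 1, ρ {s | x < (f s).toReal} := by
    intro ρ
    have e : ∫⁻ s, f s ∂ρ = ∫⁻ s, ENNReal.ofReal ((f s).toReal) ∂ρ := by
      refine lintegral_congr fun s => ?_
      rw [ENNReal.ofReal_toReal (ne_top_of_le_ne_top ENNReal.one_ne_top (h1 s))]
    rw [e, lintegral_eq_lintegral_meas_lt ρ (Filter.Eventually.of_forall fun s =>
      ENNReal.toReal_nonneg) hf.ennreal_toReal.aemeasurable]
    rw [← Set.Ioc_union_Ioi_eq_Ioi (zero_le_one (α := ℝ)),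
      lintegral_union measurableSet_Ioi
        (Set.disjoint_left.2 fun x hx hx' => not_lt.2 hx.2 hx')]
    have : ∫⁻ x in Set.Ioi (1 : ℝ), ρ {s | x < (f s).toReal} = 0 := by
      rw [setLIntegral_congr_fun (g := fun _ => 0) measurableSet_Ioi]
      · simp
      · intro x hx
        have : {s | x < (f s).toReal} = ∅ := by
          ext s
          have h2 : (f s).toReal ≤ 1 := ENNReal.toReal_le_of_le_ofReal zero_le_one (by simpa using h1 s)
          have hx : 1 < x := hx
          simp only [Set.mem_ofPred_eq, Set.mem_empty_iff_false, iff_false, not_lt]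
          linarith
        simp [this]
    rw [this, add_zero]
  rw [hlc ν, hlc π]
  calc ∫⁻ x in Set.Ioc (0 : ℝ) 1, ν {s | x < (f s).toReal}
      ≤ ∫⁻ x in Set.Ioc (0 : ℝ) 1, (π {s | x < (f s).toReal} + ENNReal.ofReal ε₁) := by
        refine lintegral_mono fun x => ?_
        have hE : MeasurableSet {s | x < (f s).toReal} :=
          measurableSet_lt measurable_const hf.ennreal_toReal
        have := (abs_le.1 (htv _ hE)).2
        have hε : 0 ≤ ε₁ := (abs_nonneg _).trans (htv _ hE)
        rw [← ENNReal.ofReal_toReal (measure_ne_top ν _),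
          ← ENNReal.ofReal_toReal (measure_ne_top π _),
          ← ENNReal.ofReal_add ENNReal.toReal_nonneg hε]
        exact ENNReal.ofReal_le_ofReal (by linarith)
    _ = _ := by
        rw [lintegral_add_right _ measurable_const]
        simp

section chain

variable {Ω : Type*} [MeasurableSpace Ω] (μ : Measure Ω) [IsProbabilityMeasure μ]
    (X : ℕ → Ω → S)

/-- Follow `x` before time `m`, then `z`. -/
def glue (m : ℕ) (x z : ℕ → S) : ℕ → S := fun i => if i < m then x i else z (i - m)

lemma measurable_glue (m : ℕ) : Measurable (fun p : (ℕ → S) × (ℕ → S) => glue m p.1 p.2) := by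
  refine measurable_pi_iff.2 fun i => ?_
  unfold glue
  split_ifs
  · exact (measurable_pi_apply _).comp measurable_fst
  · exact (measurable_pi_apply _).comp measurable_snd

variable (hXmeas : ∀ i, Measurable (X i))
    (hMarkov : ∀ n : ℕ,
      Measure.map (fun a => ((fun i : Fin (n + 1) => X i a), X (n + 1) a)) μ
        = (Measure.map (fun a => fun i : Fin (n + 1) => X i a) μ)
            ⊗ₘ (κ.comap (fun s : Fin (n + 1) → S => s (Fin.last n)) (measurable_pi_apply _)))

include hXmeas hMarkov in
lemma chain_step {F : (ℕ → S) → ℝ≥0∞} (hF : Measurable F) (m n : ℕ) :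
    ∫⁻ a, ∫⁻ z, F (glue m (fun i => X i a) z) ∂(Q κ (n + 1) (X m a)) ∂μ
      = ∫⁻ a, ∫⁻ z, F (glue (m + 1) (fun i => X i a) z) ∂(Q κ n (X (m + 1) a)) ∂μ := by
  let ext' : (Fin (m + 1) → S) → (ℕ → S) :=
    fun x i => x ⟨min i m, Nat.lt_succ_of_le (min_le_right _ _)⟩
  have hext : Measurable ext' := measurable_pi_iff.2 fun i => measurable_pi_apply _
  have hg : ∀ a z, glue (m + 1) (ext' (fun i : Fin (m + 1) => X i a)) z
      = glue (m + 1) (fun i => X i a) z := by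
    intro a z; ext i
    unfold glue
    split_ifs with h
    · simp [ext', Nat.min_eq_left (Nat.lt_succ_iff.1 h)]
    · rfl
  have hFg : Measurable (fun p : (ℕ → S) × (ℕ → S) => F (glue (m + 1) p.1 p.2)) :=
    hF.comp (measurable_glue _)
  let H : (Fin (m + 1) → S) × S → ℝ≥0∞ := fun p =>
    ∫⁻ z, F (glue (m + 1) (ext' p.1) z) ∂(Q κ n p.2)
  have hH : Measurable H := by
    have := Measurable.lintegral_kernel_prod_right'
      (κ := (Q κ n).comap (fun p : (Fin (m + 1) → S) × S => p.2) measurable_snd)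
      (f := fun r => F (glue (m + 1) (ext' r.1.1) r.2))
      (hFg.comp ((hext.comp (measurable_fst.comp measurable_fst)).prodMk measurable_snd))
    simpa [Kernel.comap_apply] using this
  have hXf : Measurable (fun a => fun i : Fin (m + 1) => X i a) :=
    measurable_pi_iff.2 fun i => hXmeas i
  have hR : ∫⁻ a, ∫⁻ z, F (glue (m + 1) (fun i => X i a) z) ∂(Q κ n (X (m + 1) a)) ∂μ
      = ∫⁻ p, H p ∂(Measure.map (fun a => ((fun i : Fin (m + 1) => X i a), X (m + 1) a)) μ) := by
    rw [lintegral_map hH (hXf.prodMk (hXmeas _))]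
    simp only [H, hg]
  have : IsProbabilityMeasure (Measure.map (fun a => fun i : Fin (m + 1) => X i a) μ) :=
    Measure.isProbabilityMeasure_map hXf.aemeasurable
  rw [hR, hMarkov m, Measure.lintegral_compProd hH, lintegral_map hH.lintegral_kernel_prod_right' hXf]
  refine lintegral_congr fun a => ?_
  rw [lintegral_Q_succ κ n (X m a) (F := fun z => F (glue m (fun i => X i a) z))
    (hF.comp ((measurable_glue m).comp measurable_prodMk_left))]
  simp only [H, hg, Kernel.comap_apply, Fin.val_last]
  refine lintegral_congr fun y => ?_
  refine lintegral_congr fun z => ?_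
  congr 1
  ext i
  unfold glue
  rcases lt_trichotomy i m with h | h | h
  · simp [h, Nat.lt_succ_of_lt h]
  · subst h; simp [pcons]
  · obtain ⟨l, rfl⟩ : ∃ l, i = m + 1 + l := ⟨i - (m + 1), by omega⟩
    have h2 : m + 1 + l - m = l + 1 := by omega
    have h3 : ¬ (m + 1 + l < m) := by omega
    have h4 : ¬ (m + 1 + l < m + 1) := by omega
    have h5 : m + 1 + l - (m + 1) = l := by omega
    simp only [h2, h3, h4, h5, if_false, pcons]

include hXmeas hMarkov in
lemma chain_eq {F : (ℕ → S) → ℝ≥0∞} (hF : Measurable F) (k : ℕ) :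
    ∫⁻ a, ∫⁻ z, F z ∂(Q κ k (X 0 a)) ∂μ
      = ∫⁻ a, F (glue k (fun i => X i a) (fun _ => X k a)) ∂μ := by
  have key : ∀ n m, ∫⁻ a, ∫⁻ z, F (glue m (fun i => X i a) z) ∂(Q κ n (X m a)) ∂μ
      = ∫⁻ a, F (glue (m + n) (fun i => X i a) (fun _ => X (m + n) a)) ∂μ := by
    intro n
    induction n with
    | zero =>
      intro m
      refine lintegral_congr fun a => ?_
      rw [lintegral_Q_zero κ (X m a) (F := fun z => F (glue m (fun i => X i a) z))
        (hF.comp ((measurable_glue m).comp measurable_prodMk_left))]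
      rfl
    | succ n ih =>
      intro m
      rw [chain_step κ μ X hXmeas hMarkov hF m n, ih (m + 1), show m + 1 + n = m + (n + 1) by omega]
  have := key k 0
  have h0 : ∀ x z : ℕ → S, glue 0 x z = z := by
    intro x z; ext i; simp [glue]
  simpa [h0] using this

end chain

end SqrtEps

/-- Let `X 0, X 1, ...` be a time-homogeneous Markov chain on a measurable
state space `S` with transition kernel `κ`, let `π` be a stationary distribution for `κ` with
respect to which `κ` is reversible (i.e. the measure `π(dx) κ(x, dy)` on `S × S` is invariant
under swapping the coordinates).  If the total variation distance between the distribution of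
`X 0` and `π` is at most `ε₁` (i.e. `|ℙ(X 0 ∈ E) − π E| ≤ ε₁` for every measurable `E`), then
for any fixed `k` and any `ε ∈ [0,1]`, the probability that `ω (X 0)` is an `ε`-outlier among
`ω (X 0), ..., ω (X k)` is at most `√(2ε) + ε₁`. -/
theorem sqrt_eps_test_of_totalVariation
    {Ω S : Type*} [MeasurableSpace Ω] [MeasurableSpace S]
    (μ : Measure Ω) [IsProbabilityMeasure μ]
    (X : ℕ → Ω → S) (hXmeas : ∀ i, Measurable (X i))
    (κ : Kernel S S) [IsMarkovKernel κ]
    (π : Measure S) [IsProbabilityMeasure π]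
    -- `π` is stationary for the kernel `κ`
    (hstat : π.bind (fun s => κ s) = π)
    -- `κ` is reversible with respect to `π`: the measure `π(dx) κ(x,dy)` is swap-invariant
    (hrev : (π ⊗ₘ κ).map Prod.swap = π ⊗ₘ κ)
    -- Markov property: the law of `((X 0, ..., X n), X (n+1))` is the law of `(X 0, ..., X n)`
    -- composed with the kernel `κ` applied to the last coordinate
    (hMarkov : ∀ n : ℕ,
      Measure.map (fun a => ((fun i : Fin (n + 1) => X i a), X (n + 1) a)) μ
        = (Measure.map (fun a => fun i : Fin (n + 1) => X i a) μ)
            ⊗ₘ (κ.comap (fun s : Fin (n + 1) → S => s (Fin.last n)) (measurable_pi_apply _)))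
    -- the total variation distance between the distribution of `X 0` and `π` is at most `ε₁`
    (ε₁ : ℝ)
    (htv : ∀ E : Set S, MeasurableSet E →
      |(Measure.map (X 0) μ E).toReal - (π E).toReal| ≤ ε₁)
    (ω : S → ℝ) (hω : Measurable ω)
    (k : ℕ) (ε : ℝ) (hε0 : 0 ≤ ε) (hε1 : ε ≤ 1) :
    μ {a | (((Finset.range (k + 1)).filter (fun i => ω (X i a) ≤ ω (X 0 a))).card : ℝ)
        ≤ ε * (k + 1)}
      ≤ ENNReal.ofReal (Real.sqrt (2 * ε) + ε₁) := by
  classical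
  set t : ℝ := ε * (k + 1) with ht
  have hν : IsProbabilityMeasure (Measure.map (X 0) μ) :=
    Measure.isProbabilityMeasure_map (hXmeas 0).aemeasurable
  have hfo := SqrtEps.measurable_fo κ t hω k
  have hε₁ : 0 ≤ ε₁ := (abs_nonneg _).trans (htv ∅ MeasurableSet.empty)
  have hpath : Measurable (fun a => fun i => X i a) := measurable_pi_iff.2 hXmeas
  have hev : μ {a | (((Finset.range (k + 1)).filter (fun i => ω (X i a) ≤ ω (X 0 a))).card : ℝ)
        ≤ t} = ∫⁻ s, SqrtEps.fo κ ω t k s ∂(Measure.map (X 0) μ) := by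
    rw [lintegral_map hfo (hXmeas 0)]
    unfold SqrtEps.fo
    rw [SqrtEps.chain_eq κ μ X hXmeas hMarkov (SqrtEps.measurable_out t hω k) k]
    have hm : MeasurableSet {a | (((Finset.range (k + 1)).filter
        (fun i => ω (X i a) ≤ ω (X 0 a))).card : ℝ) ≤ t} :=
      ((SqrtEps.measurable_cnt hω k).comp hpath) (t := {m : ℕ | (m : ℝ) ≤ t}) (by measurability)
    rw [← lintegral_indicator_one hm]
    refine lintegral_congr fun a => ?_
    rw [SqrtEps.out_congr ω t (z' := fun i => X i a)]
    · simp only [Set.indicator_apply, SqrtEps.out, SqrtEps.cnt, Set.mem_ofPred_eq, Pi.one_apply]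
    · intro i hi
      unfold SqrtEps.glue
      split_ifs with h
      · rfl
      · rw [show i = k by omega]
  rw [hev, ENNReal.ofReal_add (Real.sqrt_nonneg _) hε₁]
  refine (SqrtEps.tv_le π (Measure.map (X 0) μ) ε₁ htv hfo (SqrtEps.fo_le_one κ ω t k)).trans ?_
  gcongr
  exact SqrtEps.stat_le κ π hω hrev ε hε0 k
end

section
/- Let X_0, X_1, ... be a stationary Markov chain on a countable state space S with transition matrix P, stationary distribution π, X_0 ~ π, and label function ω : S → ℝ. For j, ℓ, k ∈ ℕ with j ≤ k, let ρ_{j,ℓ}^k(σ) denote the conditional probability, given X_j = σ, that X_j is ℓ-small among X_0, ..., X_k (defined whenever π(σ) > 0). Then for every such σ and every j ≤ k, ρ_{j,2ℓ}^k(σ) ≥ ρ_{j,ℓ}^j(σ) · ρ_{0,ℓ}^{k−j}(σ). -/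
open MeasureTheory Finset
open scoped ENNReal

/-- `X j` is `ℓ`-small among `X 0, ..., X k` (at the sample point `a`): there are at most `ℓ`
indices `i ≠ j` in `{0, ..., k}` with `ω (X i a) ≤ ω (X j a)`. -/
def IsSmallAt {Ω S : Type*} (X : ℕ → Ω → S) (ω : S → ℝ) (j ℓ k : ℕ) (a : Ω) : Prop :=
  ((Finset.range (k + 1)).filter (fun i => i ≠ j ∧ ω (X i a) ≤ ω (X j a))).card ≤ ℓ

/-- `ρ_{j,ℓ}^k(σ)`: the conditional probability, given `X j = σ`, that `X j` is `ℓ`-small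
among `X 0, ..., X k`. -/
noncomputable def rho {Ω S : Type*} [MeasurableSpace Ω] (μ : Measure Ω)
    (X : ℕ → Ω → S) (ω : S → ℝ) (j ℓ k : ℕ) (σ : S) : ℝ≥0∞ :=
  μ {a | X j a = σ ∧ IsSmallAt X ω j ℓ k a} / μ {a | X j a = σ}

/-- A countable disjoint decomposition whose outer measures add up consists of null-measurable
sets. -/
lemma nullMeas_of_tsum_le {Ω T : Type*} [MeasurableSpace Ω] [Countable T]
    (μ : Measure Ω) [IsFiniteMeasure μ] (A : Set Ω) (hA : NullMeasurableSet A μ) (C : T → Set Ω)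
    (hcov : A ⊆ ⋃ t, C t)
    (hdis : ∀ s t, s ≠ t → Disjoint (C s) (C t)) (hsub : ∀ t, C t ⊆ A)
    (hsum : ∑' t, μ (C t) ≤ μ A) (t : T) : NullMeasurableSet (C t) μ := by
  classical
  set B : T → Set Ω := fun t => toMeasurable μ (C t) with hB
  have hBm : ∀ t, MeasurableSet (B t) := fun t => measurableSet_toMeasurable _ _
  have hBμ : ∀ t, μ (B t) = μ (C t) := fun t => measure_toMeasurable _
  have hCB : ∀ t, C t ⊆ B t := fun t => subset_toMeasurable _ _
  have hnull : ∀ s, s ≠ t → μ (B t ∩ B s) = 0 := by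
    intro s hst
    set D : T → Set Ω := fun r => if r = t then B t \ B s else B r with hD
    have hDcov : A ⊆ ⋃ r, D r := by
      intro a ha
      obtain ⟨r, hr⟩ := Set.mem_iUnion.1 (hcov ha)
      have hr := hCB r hr
      by_cases h : r = t
      · by_cases h2 : a ∈ B s
        · exact Set.mem_iUnion.2 ⟨s, by simp [hD, hst, h2]⟩
        · subst h
          exact Set.mem_iUnion.2 ⟨r, by simp [hD, h2, hr]⟩
      · exact Set.mem_iUnion.2 ⟨r, by simp [hD, h, hr]⟩
    have h1 : μ A ≤ ∑' r, μ (D r) := (measure_mono hDcov).trans (measure_iUnion_le _)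
    have h2 : ∑' r, μ (D r) + μ (B t ∩ B s) = ∑' r, μ (C r) := by
      rw [ENNReal.tsum_eq_add_tsum_ite t, ENNReal.tsum_eq_add_tsum_ite (f := fun r => μ (C r)) t]
      have e1 : μ (D t) + μ (B t ∩ B s) = μ (C t) := by
        simp only [hD, if_true]
        rw [add_comm, measure_inter_add_diff _ (hBm s), hBμ]
      have e2 : ∀ r, (if r = t then 0 else μ (D r)) = (if r = t then 0 else μ (C r)) := by
        intro r
        by_cases h : r = t
        · simp [h]
        · simp [h, hD, hBμ]
      simp only [e2]
      rw [← e1]; ring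
    have h3 : μ A + μ (B t ∩ B s) ≤ μ A + 0 := by
      calc _ ≤ ∑' r, μ (D r) + μ (B t ∩ B s) := by gcongr
        _ = _ := h2
        _ ≤ _ := by simpa using hsum
    have := (ENNReal.add_le_add_iff_left (measure_ne_top μ A)).1 h3
    simpa using this
  -- inside A, B t \ C t is covered by the overlaps
  have hin : (B t ∩ A) \ C t ⊆ ⋃ s : {s // s ≠ t}, B t ∩ B s := by
    rintro a ⟨⟨hb, ha⟩, hc⟩
    obtain ⟨r, hr⟩ := Set.mem_iUnion.1 (hcov ha)
    have : r ≠ t := by rintro rfl; exact hc hr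
    exact Set.mem_iUnion.2 ⟨⟨r, this⟩, hb, hCB r hr⟩
  have hin0 : μ ((B t ∩ A) \ C t) = 0 :=
    measure_mono_null hin (measure_iUnion_null fun s => hnull s.1 s.2)
  have hCt : C t = (B t ∩ A) \ ((B t ∩ A) \ C t) := by
    rw [Set.diff_diff_cancel_left]
    exact Set.subset_inter (hCB t) (hsub t)
  rw [hCt]
  exact ((hBm t).nullMeasurableSet.inter hA).diff (NullMeasurableSet.of_null hin0)

/-- The path `X d, ..., X (d + n)`. -/
def pathAt {Ω S : Type*} (X : ℕ → Ω → S) (n d : ℕ) (a : Ω) : Fin (n + 1) → S :=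
  fun i => X (d + i) a

/-- Decompose an event along the values of a map with null-measurable fibres. -/
lemma measure_eq_tsum_fiber {Ω T : Type*} [MeasurableSpace Ω] [Countable T]
    (μ : Measure Ω) (f : Ω → T) (hf : ∀ t, NullMeasurableSet {a | f a = t} μ)
    (A : T → Prop) [DecidablePred A] :
    μ {a | A (f a)} = ∑' t, if A t then μ {a | f a = t} else 0 := by
  have h : {a | A (f a)} = ⋃ t, (if A t then {a | f a = t} else ∅) := by
    ext a
    simp only [Set.mem_ofPred_eq, Set.mem_iUnion]
    constructor
    · intro h
      exact ⟨f a, by simp [h]⟩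
    · rintro ⟨t, ht⟩
      by_cases h : A t
      · simp [h] at ht; rwa [ht]
      · simp [h] at ht
  rw [h, measure_iUnion₀]
  · refine tsum_congr fun t => ?_
    split_ifs <;> simp
  · intro s t hst
    refine Disjoint.aedisjoint ?_
    simp only [Function.onFun]
    rw [Set.disjoint_left]
    intro a ha hb
    split_ifs at ha hb <;> simp_all
  · intro t
    split_ifs
    · exact hf t
    · exact MeasurableSet.empty.nullMeasurableSet

lemma cyl_nullMeas {Ω S : Type*} [MeasurableSpace Ω] [Countable S]
    (μ : Measure Ω) [IsProbabilityMeasure μ]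
    (X : ℕ → Ω → S) (π : S → ℝ≥0∞) (P : S → S → ℝ≥0∞)
    (hπ : ∑' s, π s = 1)
    (hProw : ∀ s, ∑' t, P s t = 1)
    (hjoint : ∀ (n : ℕ) (s : ℕ → S),
      μ {a | ∀ i ≤ n, X i a = s i} = π (s 0) * ∏ i ∈ Finset.range n, P (s i) (s (i + 1)))
    (n : ℕ) : ∀ (s : ℕ → S), NullMeasurableSet {a | ∀ i ≤ n, X i a = s i} μ := by
  induction n with
  | zero =>
    intro s
    have h0 : ∀ t, μ {a | X 0 a = t} = π t := by
      intro t
      have := hjoint 0 (fun _ => t)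
      simpa using this
    have := nullMeas_of_tsum_le μ Set.univ MeasurableSet.univ.nullMeasurableSet
      (fun t => {a | X 0 a = t}) (by intro a _; simp)
      (by intro s t hst; rw [Set.disjoint_left]; intro a ha hb; simp_all)
      (by simp) (by simp [h0, hπ]) (s 0)
    simpa using this
  | succ n ih =>
    intro s
    have key : ∀ t, {a | ∀ i ≤ n + 1, X i a = Function.update s (n + 1) t i}
        = {a | (∀ i ≤ n, X i a = s i) ∧ X (n + 1) a = t} := by
      intro t
      ext a
      simp only [Set.mem_ofPred_eq]
      constructor
      · intro h
        refine ⟨fun i hi => ?_, by simpa using h (n + 1) le_rfl⟩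
        rw [h i (by omega), Function.update_of_ne (by omega)]
      · rintro ⟨h1, h2⟩ i hi
        rcases Nat.lt_or_ge n i with h | h
        · obtain rfl : i = n + 1 := by omega
          simpa using h2
        · rw [h1 i h, Function.update_of_ne (by omega)]
    have hm : ∀ t, μ {a | (∀ i ≤ n, X i a = s i) ∧ X (n + 1) a = t}
        = μ {a | ∀ i ≤ n, X i a = s i} * P (s n) t := by
      intro t
      rw [← key, hjoint, hjoint, Finset.prod_range_succ, ← mul_assoc]
      congr 2
      · refine Finset.prod_congr rfl fun i hi => ?_
        have := Finset.mem_range.1 hi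
        rw [Function.update_of_ne (by omega), Function.update_of_ne (by omega)]
      · rw [Function.update_of_ne (by omega)]
      · simp
    have := nullMeas_of_tsum_le μ _ (ih s)
      (fun t => {a | (∀ i ≤ n, X i a = s i) ∧ X (n + 1) a = t})
      (by intro a ha; simpa using ha)
      (by
        intro s t hst
        rw [Set.disjoint_left]
        rintro a ⟨_, ha⟩ ⟨_, hb⟩
        exact hst (ha.symm.trans hb))
      (by rintro t a ⟨ha, _⟩; exact ha)
      (by simp only [hm]; rw [ENNReal.tsum_mul_left, hProw, mul_one]) (s (n + 1))
    rw [← key] at this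
    simpa using this

lemma coord_nullMeas {Ω S : Type*} [MeasurableSpace Ω] [Countable S]
    (μ : Measure Ω) (X : ℕ → Ω → S)
    (h : ∀ n (s : ℕ → S), NullMeasurableSet {a | ∀ i ≤ n, X i a = s i} μ)
    (n : ℕ) (t : S) : NullMeasurableSet {a | X n a = t} μ := by
  classical
  have e : {a | X n a = t} = ⋃ u : {u : Fin (n + 1) → S // u (Fin.last n) = t},
      {a | ∀ i ≤ n, X i a = u.1 (Fin.ofNat (n + 1) i)} := by
    ext a
    simp only [Set.mem_ofPred_eq, Set.mem_iUnion]
    constructor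
    · intro ha
      refine ⟨⟨fun i => X i a, by simpa using ha⟩, fun i hi => ?_⟩
      simp [Nat.mod_eq_of_lt (Nat.lt_succ_of_le hi)]
    · rintro ⟨u, hu⟩
      have e : Fin.ofNat (n + 1) n = Fin.last n := by
        ext
        simp
      have := hu n le_rfl
      rw [e] at this
      exact this.trans u.2
  rw [e]
  exact NullMeasurableSet.iUnion fun u => h n _

lemma path_nullMeas {Ω S : Type*} [MeasurableSpace Ω]
    (μ : Measure Ω) (X : ℕ → Ω → S)
    (h : ∀ n (t : S), NullMeasurableSet {a | X n a = t} μ)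
    (n d : ℕ) (u : Fin (n + 1) → S) : NullMeasurableSet {a | pathAt X n d a = u} μ := by
  have e : {a | pathAt X n d a = u} = ⋂ i : Fin (n + 1), {a | X (d + i) a = u i} := by
    ext a
    simp [pathAt, funext_iff]
  rw [e]
  exact NullMeasurableSet.iInter fun i => h _ _

lemma path_mul {Ω S : Type*} [MeasurableSpace Ω]
    (μ : Measure Ω)
    (X : ℕ → Ω → S) (π : S → ℝ≥0∞) (P : S → S → ℝ≥0∞)
    (hjoint : ∀ (n : ℕ) (s : ℕ → S),
      μ {a | ∀ i ≤ n, X i a = s i} = π (s 0) * ∏ i ∈ Finset.range n, P (s i) (s (i + 1)))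
    (j m : ℕ) (u : Fin (j + 1) → S) (v : Fin (m + 1) → S) (huv : u (Fin.last j) = v 0) :
    μ {a | pathAt X j 0 a = u ∧ pathAt X m j a = v} * π (v 0)
      = μ {a | pathAt X j 0 a = u} * μ {a | pathAt X m 0 a = v} := by
  set s : ℕ → S := fun i => u (Fin.ofNat (j + 1) i) with hs
  set t : ℕ → S := fun i => v (Fin.ofNat (m + 1) i) with ht
  have hsi : ∀ i : Fin (j + 1), u i = s i := by
    intro i; simp [hs]
  have hti : ∀ i : Fin (m + 1), v i = t i := by
    intro i; simp [ht]
  have hst : s j = t 0 := by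
    have h1 := hsi (Fin.last j)
    have h2 := hti 0
    simp only [Fin.val_last] at h1
    simp only [Fin.val_zero] at h2
    rw [← h1, ← h2, huv]
  set r : ℕ → S := fun i => if i ≤ j then s i else t (i - j) with hr
  have hr1 : ∀ i ≤ j, r i = s i := fun i hi => by simp [hr, hi]
  have hr2 : ∀ i, r (j + i) = t i := by
    intro i
    rcases Nat.eq_zero_or_pos i with rfl | h
    · simp [hr, hst]
    · have : ¬ (j + i ≤ j) := by omega
      simp only [hr, this, if_false]
      congr 1; omega
  have eu : {a | pathAt X j 0 a = u} = {a | ∀ i ≤ j, X i a = s i} := by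
    ext a
    simp only [pathAt, funext_iff, Set.mem_ofPred_eq, zero_add, hsi]
    exact ⟨fun h i hi => h ⟨i, by omega⟩, fun h i => h i (by omega)⟩
  have ev : {a | pathAt X m 0 a = v} = {a | ∀ i ≤ m, X i a = t i} := by
    ext a
    simp only [pathAt, funext_iff, Set.mem_ofPred_eq, zero_add, hti]
    exact ⟨fun h i hi => h ⟨i, by omega⟩, fun h i => h i (by omega)⟩
  have euv : {a | pathAt X j 0 a = u ∧ pathAt X m j a = v} = {a | ∀ i ≤ j + m, X i a = r i} := by
    ext a
    simp only [pathAt, funext_iff, Set.mem_ofPred_eq, zero_add, hsi, hti]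
    constructor
    · rintro ⟨h1, h2⟩ i hi
      rcases Nat.le_total i j with h | h
      · rw [hr1 i h]; exact h1 ⟨i, by omega⟩
      · obtain ⟨c, rfl⟩ := Nat.exists_eq_add_of_le h
        rw [hr2]; exact h2 ⟨c, by omega⟩
    · intro h
      refine ⟨fun i => ?_, fun i => ?_⟩
      · rw [h i (by omega), hr1 i (by omega)]
      · rw [h (j + i) (by omega), hr2]
  rw [eu, ev, euv, hjoint, hjoint, hjoint, Finset.prod_range_add]
  have p1 : ∏ i ∈ Finset.range j, P (r i) (r (i + 1)) = ∏ i ∈ Finset.range j, P (s i) (s (i + 1)) := by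
    refine Finset.prod_congr rfl fun i hi => ?_
    have := Finset.mem_range.1 hi
    rw [hr1 _ (by omega), hr1 _ (by omega)]
  have p2 : ∏ i ∈ Finset.range m, P (r (j + i)) (r (j + i + 1))
      = ∏ i ∈ Finset.range m, P (t i) (t (i + 1)) := by
    refine Finset.prod_congr rfl fun i hi => ?_
    rw [hr2, add_assoc, hr2]
  have hv0 : v 0 = t 0 := by simpa using hti 0
  rw [p1, p2, hr1 0 (by omega), hv0]
  ring

lemma markov_mul {Ω S : Type*} [MeasurableSpace Ω] [Countable S]
    (μ : Measure Ω)
    (X : ℕ → Ω → S) (π : S → ℝ≥0∞) (P : S → S → ℝ≥0∞)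
    (hjoint : ∀ (n : ℕ) (s : ℕ → S),
      μ {a | ∀ i ≤ n, X i a = s i} = π (s 0) * ∏ i ∈ Finset.range n, P (s i) (s (i + 1)))
    (h : ∀ n (t : S), NullMeasurableSet {a | X n a = t} μ)
    (j m : ℕ) (σ : S) (A : (Fin (j + 1) → S) → Prop) (B : (Fin (m + 1) → S) → Prop)
    (hA : ∀ u, A u → u (Fin.last j) = σ) (hB : ∀ v, B v → v 0 = σ) :
    μ {a | A (pathAt X j 0 a) ∧ B (pathAt X m j a)} * π σ
      = μ {a | A (pathAt X j 0 a)} * μ {a | B (pathAt X m 0 a)} := by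
  classical
  rw [measure_eq_tsum_fiber μ (pathAt X j 0) (path_nullMeas μ X h j 0) A,
    measure_eq_tsum_fiber μ (pathAt X m 0) (path_nullMeas μ X h m 0) B]
  have := measure_eq_tsum_fiber μ (fun a => (pathAt X j 0 a, pathAt X m j a))
    (by
      rintro ⟨u, v⟩
      have e : {a | (pathAt X j 0 a, pathAt X m j a) = (u, v)}
        = {a | pathAt X j 0 a = u} ∩ {a | pathAt X m j a = v} := by
        ext a; simp
      rw [e]
      exact (path_nullMeas μ X h j 0 u).inter (path_nullMeas μ X h m j v))
    (fun p => A p.1 ∧ B p.2)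
  simp only at this
  rw [this, ENNReal.tsum_prod', ← ENNReal.tsum_mul_right, ← ENNReal.tsum_mul_right]
  refine tsum_congr fun u => ?_
  rw [← ENNReal.tsum_mul_right, ← ENNReal.tsum_mul_left]
  refine tsum_congr fun v => ?_
  by_cases hu : A u
  · by_cases hv : B v
    · have := path_mul μ X π P hjoint j m u v ((hA u hu).trans (hB v hv).symm)
      rw [hB v hv] at this
      simpa [hu, hv] using this
    · simp [hv]
  · simp [hu]

lemma marginal {Ω S : Type*} [MeasurableSpace Ω] [Countable S]
    (μ : Measure Ω)
    (X : ℕ → Ω → S) (π : S → ℝ≥0∞) (P : S → S → ℝ≥0∞)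
    (hπ : ∑' s, π s = 1)
    (hjoint : ∀ (n : ℕ) (s : ℕ → S),
      μ {a | ∀ i ≤ n, X i a = s i} = π (s 0) * ∏ i ∈ Finset.range n, P (s i) (s (i + 1)))
    (hstat : ∀ t, ∑' s, π s * P s t = π t)
    (h : ∀ n (t : S), NullMeasurableSet {a | X n a = t} μ)
    (j : ℕ) : ∀ t, μ {a | X j a = t} = π t := by
  induction j with
  | zero =>
    intro t
    simpa using hjoint 0 (fun _ => t)
  | succ j ih =>
    intro t
    have hstep : ∀ s, μ {a | X j a = s ∧ X (j + 1) a = t} = π s * P s t := by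
      intro s
      by_cases hs : π s = 0
      · rw [hs, zero_mul]
        refine measure_mono_null (t := {a | X j a = s}) (fun a ha => ha.1) ?_
        rw [ih, hs]
      · have hs' : π s ≠ ∞ := ne_top_of_le_ne_top ENNReal.one_ne_top
          (hπ ▸ ENNReal.le_tsum s)
        have hm := markov_mul μ X π P hjoint h j 1 s (fun u => u (Fin.last j) = s)
          (fun v => v 0 = s ∧ v 1 = t) (fun u hu => hu) (fun v hv => hv.1)
        have h01 : μ {a | X 0 a = s ∧ X 1 a = t} = π s * P s t := by
          have := hjoint 1 (fun i => if i = 0 then s else t)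
          simp only [Finset.prod_range_one, if_true] at this
          simp only [zero_add, one_ne_zero, if_false] at this
          rw [← this]
          congr 1
          ext a
          simp only [Set.mem_ofPred_eq]
          constructor
          · rintro ⟨h1, h2⟩ i hi
            interval_cases i <;> simp [h1, h2]
          · intro h
            exact ⟨by simpa using h 0 (by omega), by simpa using h 1 le_rfl⟩
        simp only [pathAt, Fin.val_last, zero_add, Fin.val_zero, add_zero, Fin.val_one] at hm
        rw [h01, ih s] at hm
        have e : {a | X j a = s ∧ X j a = s ∧ X (j + 1) a = t}
            = {a | X j a = s ∧ X (j + 1) a = t} := by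
          ext a; simp
        rw [e, mul_comm] at hm
        exact (ENNReal.mul_right_inj hs hs').1 hm
    rw [← hstat t]
    have e : {a | X (j + 1) a = t} = ⋃ s, {a | X j a = s ∧ X (j + 1) a = t} := by
      ext a; simp
    rw [e, measure_iUnion₀]
    · exact tsum_congr hstep
    · intro s s' hss
      refine Disjoint.aedisjoint ?_
      simp only [Function.onFun]
      rw [Set.disjoint_left]
      rintro a ⟨ha, _⟩ ⟨hb, _⟩
      exact hss (ha.symm.trans hb)
    · intro s
      exact (h j s).inter (h (j + 1) t)

/-- Smallness of a finite path. -/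
def PathSmall {S : Type*} (ω : S → ℝ) (n q ℓ : ℕ) (u : Fin (n + 1) → S) : Prop :=
  IsSmallAt (fun i (v : Fin (n + 1) → S) => v (Fin.ofNat (n + 1) i)) ω q ℓ n u

lemma pathSmall_iff {Ω S : Type*} (X : ℕ → Ω → S) (ω : S → ℝ) (n d q ℓ : ℕ) (hq : q ≤ n) (a : Ω) :
    PathSmall ω n q ℓ (pathAt X n d a) ↔ IsSmallAt (fun i => X (d + i)) ω q ℓ n a := by
  unfold PathSmall IsSmallAt pathAt
  have : ∀ i ∈ Finset.range (n + 1), ((i ≠ q ∧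
      ω (X (d + (Fin.ofNat (n + 1) i : Fin (n + 1))) a)
        ≤ ω (X (d + (Fin.ofNat (n + 1) q : Fin (n + 1))) a))
      ↔ (i ≠ q ∧ ω (X (d + i) a) ≤ ω (X (d + q) a))) := by
    intro i hi
    have := Finset.mem_range.1 hi
    simp [Nat.mod_eq_of_lt this, Nat.mod_eq_of_lt (Nat.lt_succ_of_le hq)]
  rw [Finset.filter_congr this]

lemma small_combine {Ω S : Type*} (X : ℕ → Ω → S) (ω : S → ℝ) (j m ℓ : ℕ) (a : Ω)
    (h1 : IsSmallAt X ω j ℓ j a) (h2 : IsSmallAt (fun i => X (j + i)) ω 0 ℓ m a) :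
    IsSmallAt X ω j (2 * ℓ) (j + m) a := by
  classical
  unfold IsSmallAt at *
  have hsub : (Finset.range (j + m + 1)).filter (fun i => i ≠ j ∧ ω (X i a) ≤ ω (X j a))
      ⊆ (Finset.range (j + 1)).filter (fun i => i ≠ j ∧ ω (X i a) ≤ ω (X j a)) ∪
        ((Finset.range (m + 1)).filter
          (fun i => i ≠ 0 ∧ ω (X (j + i) a) ≤ ω (X (j + 0) a))).image (fun i => j + i) := by
    intro i hi
    simp only [Finset.mem_filter, Finset.mem_range, Finset.mem_union, Finset.mem_image] at hi ⊢
    obtain ⟨hi1, hi2, hi3⟩ := hi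
    rcases Nat.lt_or_ge i (j + 1) with h | h
    · exact Or.inl ⟨h, hi2, hi3⟩
    · obtain ⟨c, rfl⟩ := Nat.exists_eq_add_of_le (show j ≤ i by omega)
      exact Or.inr ⟨c, ⟨by omega, by omega, by simpa using hi3⟩, rfl⟩
  refine (Finset.card_le_card hsub).trans ((Finset.card_union_le _ _).trans ?_)
  have := h1
  have h2' : ((Finset.range (m + 1)).filter
          (fun i => i ≠ 0 ∧ ω (X (j + i) a) ≤ ω (X (j + 0) a))).card ≤ ℓ := h2
  have := Finset.card_image_le (s := (Finset.range (m + 1)).filter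
          (fun i => i ≠ 0 ∧ ω (X (j + i) a) ≤ ω (X (j + 0) a))) (f := fun i => j + i)
  omega

/-- Let `X 0, X 1, ...` be a stationary Markov chain on a countable state
space `S` with transition matrix `P`, stationary distribution `π`, `X 0 ~ π`, and label
function `ω : S → ℝ`.  Then for `j ≤ k`, `ℓ : ℕ` and `σ` with `π σ > 0`,
`ρ_{j,2ℓ}^k(σ) ≥ ρ_{j,ℓ}^j(σ) · ρ_{0,ℓ}^{k−j}(σ)`. -/
theorem rho_split
    {Ω S : Type*} [MeasurableSpace Ω] [Countable S]
    (μ : Measure Ω) [IsProbabilityMeasure μ]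
    (X : ℕ → Ω → S) (π : S → ℝ≥0∞) (P : S → S → ℝ≥0∞) (ω : S → ℝ)
    (hπ : ∑' s, π s = 1)
    (hProw : ∀ s, ∑' t, P s t = 1)
    -- the chain is the Markov chain with initial distribution `π` and transition matrix `P`
    (hjoint : ∀ (n : ℕ) (s : ℕ → S),
      μ {a | ∀ i ≤ n, X i a = s i} = π (s 0) * ∏ i ∈ Finset.range n, P (s i) (s (i + 1)))
    -- `π` is stationary
    (hstat : ∀ t, ∑' s, π s * P s t = π t)
    (j ℓ k : ℕ) (hjk : j ≤ k) (σ : S) (hσ : 0 < π σ) :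
    rho μ X ω j ℓ j σ * rho μ X ω 0 ℓ (k - j) σ ≤ rho μ X ω j (2 * ℓ) k σ := by
  classical
  have hco := coord_nullMeas μ X (cyl_nullMeas μ X π P hπ hProw hjoint)
  have hmar := marginal μ X π P hπ hjoint hstat hco
  obtain ⟨m, rfl⟩ := Nat.exists_eq_add_of_le hjk
  rw [Nat.add_sub_cancel_left]
  have hσ' : π σ ≠ ∞ := ne_top_of_le_ne_top ENNReal.one_ne_top (hπ ▸ ENNReal.le_tsum σ)
  have hm := markov_mul μ X π P hjoint hco j m σ
    (fun u => u (Fin.last j) = σ ∧ PathSmall ω j j ℓ u)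
    (fun v => v 0 = σ ∧ PathSmall ω m 0 ℓ v) (fun u hu => hu.1) (fun v hv => hv.1)
  simp only [pathSmall_iff X ω j 0 j ℓ le_rfl, pathSmall_iff X ω m j 0 ℓ (Nat.zero_le _),
    pathSmall_iff X ω m 0 0 ℓ (Nat.zero_le _)] at hm
  simp only [pathAt, Fin.val_last, zero_add, Fin.val_zero, add_zero] at hm
  unfold rho
  simp only [hmar]
  have hle : μ {a | (X j a = σ ∧ IsSmallAt (fun i => X i) ω j ℓ j a) ∧
      X j a = σ ∧ IsSmallAt (fun i => X (j + i)) ω 0 ℓ m a}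
      ≤ μ {a | X j a = σ ∧ IsSmallAt X ω j (2 * ℓ) (j + m) a} := by
    refine measure_mono ?_
    rintro a ⟨⟨h1, h2⟩, _, h3⟩
    exact ⟨h1, small_combine X ω j m ℓ a h2 h3⟩
  refine le_trans ?_ (ENNReal.div_le_div_right hle (π σ))
  rw [ENNReal.le_div_iff_mul_le (Or.inl hσ.ne') (Or.inl hσ')]
  refine le_of_eq ((ENNReal.mul_left_inj hσ.ne' hσ').1 ?_)
  rw [hm]
  have c1 : ∀ x : ℝ≥0∞, x / π σ * π σ = x := fun x => ENNReal.div_mul_cancel hσ.ne' hσ'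
  calc _ = (μ {a | X j a = σ ∧ IsSmallAt X ω j ℓ j a} / π σ * π σ) *
        (μ {a | X 0 a = σ ∧ IsSmallAt X ω 0 ℓ m a} / π σ * π σ) := by ring
    _ = _ := by rw [c1, c1]
end

section
/- Let X_0, X_1, ... be a stationary reversible Markov chain on a countable state space S with reversible stationary distribution π, X_0 ~ π, and label function ω : S → ℝ. For j, ℓ, k ∈ ℕ with j ≤ k, let ρ_{j,ℓ}^k(σ) denote the conditional probability, given X_j = σ, that X_j is ℓ-small among X_0, ..., X_k (defined whenever π(σ) > 0). Then for every σ with π(σ) > 0 and every j ≤ k, ρ_{j,2ℓ}^k(σ) ≥ (ρ_{0,ℓ}^k(σ))^2. -/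
open MeasureTheory Finset
open scoped ENNReal

/-- weight of a path `s, y 0, ..., y (n-1)` under the kernel `P` -/
noncomputable def pathQ {S : Type*} (P : S → S → ℝ≥0∞) : (n : ℕ) → S → (Fin n → S) → ℝ≥0∞
  | 0, _, _ => 1
  | n + 1, s, y => P s (y 0) * pathQ P n (y 0) (fun i => y i.succ)

theorem pathQ_seq {S : Type*} (P : S → S → ℝ≥0∞) (n : ℕ) (x : ℕ → S) :
    pathQ P n (x 0) (fun i => x (i + 1)) = ∏ i ∈ Finset.range n, P (x i) (x (i + 1)) := by
  induction n generalizing x with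
  | zero => simp [pathQ]
  | succ n ih =>
    rw [Finset.prod_range_succ', mul_comm]
    have := ih (fun i => x (i + 1))
    simp only [pathQ, Fin.val_succ, Fin.val_zero]
    simp only [zero_add] at this ⊢
    rw [this]

theorem pathQ_sum {S : Type*} (P : S → S → ℝ≥0∞) (hP : ∀ x, ∑' y, P x y = 1) (n : ℕ) (s : S) :
    ∑' y, pathQ P n s y = 1 := by
  induction n generalizing s with
  | zero => simp [pathQ]
  | succ n ih =>
    rw [← (Fin.consEquiv (fun _ : Fin (n + 1) => S)).tsum_eq, ENNReal.tsum_prod']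
    simp only [Fin.consEquiv, Equiv.coe_fn_mk, pathQ, Fin.cons_zero, Fin.cons_succ,
      ENNReal.tsum_mul_left, ih, mul_one, hP]

theorem measure_atoms {Ω T : Type*} [MeasurableSpace Ω] [Countable T] (μ : Measure Ω)
    [IsProbabilityMeasure μ] (f : Ω → T) (m : T → ℝ≥0∞) (hf : ∀ t, μ {a | f a = t} = m t)
    (hm : ∑' t, m t = 1) (A : Set T) : μ {a | f a ∈ A} = ∑' t, A.indicator m t := by
  have key : ∀ A : Set T, μ {a | f a ∈ A} ≤ ∑' t, A.indicator m t := by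
    intro A
    have h : {a | f a ∈ A} = ⋃ t, {a | f a = t ∧ t ∈ A} := by ext a; simp
    rw [h]
    refine (measure_iUnion_le _).trans (ENNReal.tsum_le_tsum fun t => ?_)
    by_cases ht : t ∈ A <;> simp [ht, hf]
  refine le_antisymm (key A) ?_
  have h1 : ∑' t, A.indicator m t + ∑' t, Aᶜ.indicator m t = 1 := by
    rw [← ENNReal.tsum_add, ← hm]
    exact tsum_congr fun t => Set.indicator_self_add_compl_apply A m t
  have h2 : (1 : ℝ≥0∞) ≤ μ {a | f a ∈ A} + μ {a | f a ∈ Aᶜ} := by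
    rw [← measure_univ (μ := μ)]
    refine (measure_mono ?_).trans (measure_union_le _ _)
    intro a _
    exact em _
  have h3 : ∑' t, Aᶜ.indicator m t ≠ ∞ := by
    intro h; rw [h] at h1; simp at h1
  rw [← h1] at h2
  exact (ENNReal.add_le_add_iff_right h3).1 (h2.trans (by gcongr; exact key _))

theorem rev_prod {S : Type*} (π : S → ℝ≥0∞) (P : S → S → ℝ≥0∞)
    (hdb : ∀ a b, π a * P a b = π b * P b a) (n : ℕ) (x : ℕ → S) :
    π (x 0) * ∏ i ∈ Finset.range n, P (x i) (x (i + 1)) =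
      π (x n) * pathQ P n (x n) (fun i => x (n - (i + 1))) := by
  have h := pathQ_seq P n (fun i => x (n - i))
  simp only [Nat.sub_zero] at h
  rw [h]
  have h2 : ∏ i ∈ Finset.range n, P (x (n - i)) (x (n - (i + 1))) =
      ∏ i ∈ Finset.range n, P (x (i + 1)) (x i) := by
    rw [← Finset.prod_range_reflect (fun i => P (x (i + 1)) (x i))]
    refine Finset.prod_congr rfl fun i hi => ?_
    have := Finset.mem_range.1 hi
    rw [show n - 1 - i + 1 = n - i by omega, show n - 1 - i = n - (i + 1) by omega]
  rw [h2]
  clear h h2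
  induction n with
  | zero => simp
  | succ n ih =>
    rw [Finset.prod_range_succ, Finset.prod_range_succ, ← mul_assoc, ih,
      mul_comm (∏ i ∈ _, _) (P _ _), ← mul_assoc, ← hdb, mul_right_comm]

theorem main_formula
    {Ω S : Type*} [MeasurableSpace Ω] [Countable S]
    (μ : Measure Ω) [IsProbabilityMeasure μ]
    (X : ℕ → Ω → S) (π : S → ℝ≥0∞) (P : S → S → ℝ≥0∞)
    (hπ : ∑' x, π x = 1)
    (hProw : ∀ x, ∑' y, P x y = 1)
    (hjoint : ∀ (n : ℕ) (x : ℕ → S),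
      μ {a | ∀ i ≤ n, X i a = x i} = π (x 0) * ∏ i ∈ Finset.range n, P (x i) (x (i + 1)))
    (hdb : ∀ a b, π a * P a b = π b * P b a)
    (j m : ℕ) (σ : S) (A : Set (Fin j → S)) (B : Set (Fin m → S)) :
    μ {a | X j a = σ ∧ (fun i : Fin j => X (j - (i + 1)) a) ∈ A ∧
        (fun i : Fin m => X (j + (i + 1)) a) ∈ B} =
      π σ * (∑' y, A.indicator (pathQ P j σ) y) * (∑' z, B.indicator (pathQ P m σ) z) := by
  have h := measure_atoms μ
    (fun a => (X j a, (fun i : Fin j => X (j - (i + 1)) a), (fun i : Fin m => X (j + (i + 1)) a)))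
    (fun t => π t.1 * (pathQ P j t.1 t.2.1 * pathQ P m t.1 t.2.2)) ?_ ?_
    {t | t.1 = σ ∧ t.2.1 ∈ A ∧ t.2.2 ∈ B}
  · refine h.trans ?_
    rw [ENNReal.tsum_prod', tsum_eq_single σ]
    · rw [ENNReal.tsum_prod', mul_assoc, ← ENNReal.tsum_mul_right, ← ENNReal.tsum_mul_left]
      refine tsum_congr fun y => ?_
      rw [← ENNReal.tsum_mul_left, ← ENNReal.tsum_mul_left]
      refine tsum_congr fun z => ?_
      by_cases hy : y ∈ A <;> by_cases hz : z ∈ B <;> simp [hy, hz]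
    · intro s hs
      simp [hs]
  · rintro ⟨s, y, z⟩
    obtain ⟨x, hx0, hxy, hxz⟩ : ∃ x : ℕ → S, x j = s ∧ (∀ i : Fin j, x (j - (i + 1)) = y i) ∧
        (∀ i : Fin m, x (j + (i + 1)) = z i) := by
      refine ⟨fun i => if h : i < j then y ⟨j - 1 - i, by omega⟩ else
        if h : i - (j + 1) < m ∧ i ≠ j then z ⟨i - (j + 1), h.1⟩ else s, ?_, ?_, ?_⟩
      · simp
      · intro i
        have hi := i.2
        beta_reduce
        rw [dif_pos (by omega)]
        congr 1
        ext
        simp only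
        omega
      · intro i
        have hi := i.2
        beta_reduce
        rw [dif_neg (by omega), dif_pos (by omega)]
        congr 1
        ext
        simp only
        omega
    have hset : {a | (X j a, (fun i : Fin j => X (j - (i + 1)) a),
        (fun i : Fin m => X (j + (i + 1)) a)) = (s, y, z)} = {a | ∀ i ≤ j + m, X i a = x i} := by
      ext a
      simp only [Set.mem_ofPred_eq, Prod.mk.injEq, funext_iff, ← hx0, ← hxy, ← hxz]
      constructor
      · rintro ⟨h0, h1, h2⟩ i hi
        rcases lt_trichotomy i j with hij | rfl | hij
        · have := h1 ⟨j - 1 - i, by omega⟩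
          simpa only [show j - (j - 1 - i + 1) = i by omega] using this
        · exact h0
        · have := h2 ⟨i - (j + 1), by omega⟩
          simpa only [show j + (i - (j + 1) + 1) = i by omega] using this
      · intro h
        exact ⟨h _ (by omega), fun i => h _ (by omega), fun i => h _ (by omega)⟩
    rw [hset, hjoint, Finset.prod_range_add, ← mul_assoc, rev_prod π P hdb, mul_assoc]
    have hQ := pathQ_seq P m (fun i => x (j + i))
    simp only [add_zero] at hQ
    simp only [add_assoc]
    rw [← hQ]
    simp only [hx0, hxy, hxz]
  · simp only [ENNReal.tsum_prod', ENNReal.tsum_mul_left, pathQ_sum P hProw, mul_one, hπ]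

/-- Let `X 0, X 1, ...` be a stationary reversible Markov chain on a countable
state space `S` with reversible stationary distribution `π`, `X 0 ~ π`, and label function
`ω : S → ℝ`.  (Reversibility: for every `k`, the joint distribution of `(X 0, ..., X k)`
equals that of `(X k, ..., X 0)`.)  Then for every `σ` with `π σ > 0`, every `ℓ`, and every
`j ≤ k`, `ρ_{j,2ℓ}^k(σ) ≥ (ρ_{0,ℓ}^k(σ))²`. -/
theorem rho_ge_sq
    {Ω S : Type*} [MeasurableSpace Ω] [Countable S]
    (μ : Measure Ω) [IsProbabilityMeasure μ]
    (X : ℕ → Ω → S) (π : S → ℝ≥0∞) (P : S → S → ℝ≥0∞) (ω : S → ℝ)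
    (hπ : ∑' x, π x = 1)
    (hProw : ∀ x, ∑' y, P x y = 1)
    -- the chain is the Markov chain with initial distribution `π` and transition matrix `P`
    (hjoint : ∀ (n : ℕ) (x : ℕ → S),
      μ {a | ∀ i ≤ n, X i a = x i} = π (x 0) * ∏ i ∈ Finset.range n, P (x i) (x (i + 1)))
    -- `π` is stationary
    (hstat : ∀ y, ∑' x, π x * P x y = π y)
    -- reversibility: `(X 0, ..., X k)` and `(X k, ..., X 0)` have the same joint distribution
    (hrev : ∀ (n : ℕ) (x : ℕ → S),
      μ {a | ∀ i ≤ n, X i a = x i} = μ {a | ∀ i ≤ n, X i a = x (n - i)})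
    (j ℓ k : ℕ) (hjk : j ≤ k) (σ : S) (hσ : 0 < π σ) :
    (rho μ X ω 0 ℓ k σ) ^ 2 ≤ rho μ X ω j (2 * ℓ) k σ := by
  classical
  have hdb : ∀ a b, π a * P a b = π b * P b a := by
    intro a b
    have h := hrev 1 (fun i => if i = 0 then a else b)
    rw [hjoint 1, hjoint 1 (fun i => if 1 - i = 0 then a else b)] at h
    simpa using h
  have F := main_formula μ X π P hπ hProw hjoint hdb
  obtain ⟨m, rfl⟩ := Nat.exists_eq_add_of_le hjk
  let C : (n : ℕ) → Set (Fin n → S) := fun n =>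
    {y | (Finset.univ.filter (fun i => ω (y i) ≤ ω σ)).card ≤ ℓ}
  have hC : ∀ n y, y ∈ C n ↔ (Finset.univ.filter (fun i => ω (y i) ≤ ω σ)).card ≤ ℓ :=
    fun _ _ => Iff.rfl
  let G : ℕ → ℝ≥0∞ := fun n => ∑' y, (C n).indicator (pathQ P n σ) y
  have hσt : π σ ≠ ∞ := by
    intro h
    have := ENNReal.le_tsum (f := π) σ
    rw [h, hπ] at this
    simp at this
  have hden : ∀ j, μ {a | X j a = σ} = π σ := by
    intro j
    have := F j 0 σ Set.univ Set.univ
    simpa [pathQ_sum P hProw, pathQ] using this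
  have hF0 : ∀ n, μ {a | X 0 a = σ ∧ (fun i : Fin n => X (i + 1) a) ∈ C n} = π σ * G n := by
    intro n
    have := F 0 n σ Set.univ (C n)
    simpa [pathQ_sum P hProw, pathQ] using this
  have hmono : ∀ n n', n ≤ n' → G n' ≤ G n := by
    intro n n' hn
    have h : π σ * G n' ≤ π σ * G n := by
      rw [← hF0, ← hF0]
      refine measure_mono ?_
      rintro a ⟨h0, h1⟩
      refine ⟨h0, (hC _ _).2 (le_trans ?_ ((hC _ _).1 h1))⟩
      refine Finset.card_le_card_of_injOn (Fin.castLE hn) ?_ (Fin.castLE_injective hn).injOn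
      intro i hi
      simpa using hi
    exact (ENNReal.mul_le_mul_iff_right hσ.ne' hσt).1 h
  have hup : rho μ X ω 0 ℓ (j + m) σ ≤ G (j + m) := by
    unfold rho
    rw [hden, ENNReal.div_le_iff hσ.ne' hσt, mul_comm, ← hF0]
    refine measure_mono ?_
    rintro a ⟨h0, h1⟩
    refine ⟨h0, (hC _ _).2 (le_trans ?_ h1)⟩
    refine Finset.card_le_card_of_injOn (fun i => (i : ℕ) + 1) ?_ ?_
    · intro i hi
      have := i.2
      simpa [h0] using hi
    · intro i _ i' _ h
      ext
      simpa using h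
  have hlow : G j * G m ≤ rho μ X ω j (2 * ℓ) (j + m) σ := by
    unfold rho
    rw [hden, ENNReal.le_div_iff_mul_le (Or.inl hσ.ne') (Or.inl hσt), mul_comm, ← mul_assoc,
      ← F j m σ (C j) (C m)]
    refine measure_mono ?_
    rintro a ⟨h0, h1, h2⟩
    refine ⟨h0, ?_⟩
    have hsub : ((Finset.range (j + m + 1)).filter (fun i => i ≠ j ∧ ω (X i a) ≤ ω (X j a))) ⊆
        (Finset.univ.filter (fun i : Fin j => ω (X (j - (i + 1)) a) ≤ ω σ)).image
          (fun i : Fin j => j - ((i : ℕ) + 1)) ∪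
        (Finset.univ.filter (fun i : Fin m => ω (X (j + (i + 1)) a) ≤ ω σ)).image
          (fun i : Fin m => j + ((i : ℕ) + 1)) := by
      intro i hi
      simp only [Finset.mem_filter, Finset.mem_range, h0] at hi
      obtain ⟨hi1, hi2, hi3⟩ := hi
      simp only [Finset.mem_union, Finset.mem_image, Finset.mem_filter, Finset.mem_univ, true_and]
      rcases lt_or_gt_of_ne hi2 with hij | hij
      · left
        have e : j - (j - 1 - i + 1) = i := by omega
        exact ⟨⟨j - 1 - i, by omega⟩, by simpa only [e] using hi3, e⟩
      · right
        have e : j + (i - (j + 1) + 1) = i := by omega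
        exact ⟨⟨i - (j + 1), by omega⟩, by simpa only [e] using hi3, e⟩
    refine (Finset.card_le_card hsub).trans ((Finset.card_union_le _ _).trans ?_)
    rw [two_mul]
    exact add_le_add (Finset.card_image_le.trans ((hC _ _).1 h1)) (Finset.card_image_le.trans ((hC _ _).1 h2))
  calc (rho μ X ω 0 ℓ (j + m) σ) ^ 2 ≤ G (j + m) ^ 2 := by gcongr
    _ = G (j + m) * G (j + m) := sq _
    _ ≤ G j * G m := mul_le_mul' (hmono _ _ (by omega)) (hmono _ _ (by omega))
    _ ≤ _ := hlow
end

section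
/- Let X_0, X_1, ... be a stationary reversible Markov chain on a countable state space S with reversible stationary distribution π, X_0 ~ π, and label function ω : S → ℝ. For j, ℓ, k ∈ ℕ with j ≤ k, let ρ_{j,ℓ}^k denote the (unconditional) probability that X_j is ℓ-small among X_0, ..., X_k. Then for every j ≤ k and every ℓ, ρ_{j,2ℓ}^k ≥ (ρ_{0,ℓ}^k)^2. -/
open MeasureTheory Finset
open scoped ENNReal

namespace SmallChain

/-- weight of the path `s, x 0, x 1, ...` -/
noncomputable def W {S : Type*} (P : S → S → ℝ≥0∞) : (n : ℕ) → S → (Fin n → S) → ℝ≥0∞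
  | 0, _, _ => 1
  | n + 1, s, x => P s (x 0) * W P n (x 0) (fun i => x i.succ)

/-- number of entries with label at most `t` -/
noncomputable def cnt {S : Type*} (ω : S → ℝ) (t : ℝ) {n : ℕ} (x : Fin n → S) : ℕ :=
  ∑ i : Fin n, if ω (x i) ≤ t then 1 else 0

/-- probability, from `s`, that `c` plus the number of low labels is at most `ℓ` -/
noncomputable def Q {S : Type*} (P : S → S → ℝ≥0∞) (ω : S → ℝ) (t : ℝ) (ℓ : ℕ) :
    ℕ → S → ℕ → ℝ≥0∞
  | 0, _, c => if c ≤ ℓ then 1 else 0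
  | n + 1, s, c => ∑' y, P s y * Q P ω t ℓ n y (c + if ω y ≤ t then 1 else 0)

lemma tsum_cons {S : Type*} (n : ℕ) (F : (Fin (n + 1) → S) → ℝ≥0∞) :
    ∑' x, F x = ∑' y : S, ∑' x : Fin n → S, F (Fin.cons y x) := by
  rw [← (Fin.consEquiv (fun _ : Fin (n + 1) => S)).tsum_eq, ENNReal.tsum_prod']
  rfl

lemma tsum_W {S : Type*} (P : S → S → ℝ≥0∞) (hP : ∀ x, ∑' y, P x y = 1) (n : ℕ) (s : S) :
    ∑' x, W P n s x = 1 := by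
  induction n generalizing s with
  | zero => simp [W]
  | succ n ih =>
    rw [tsum_cons]
    simp only [W, Fin.cons_zero, Fin.cons_succ, ENNReal.tsum_mul_left, ih, mul_one, hP]

lemma Q_eq {S : Type*} (P : S → S → ℝ≥0∞) (ω : S → ℝ) (t : ℝ) (ℓ n : ℕ) (s : S) (c : ℕ) :
    ∑' x, W P n s x * (if c + cnt ω t x ≤ ℓ then 1 else 0) = Q P ω t ℓ n s c := by
  induction n generalizing s c with
  | zero => simp [W, Q, cnt]
  | succ n ih =>
    rw [tsum_cons]
    simp only [W, Q, Fin.cons_zero, Fin.cons_succ, ← ih, ← ENNReal.tsum_mul_left]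
    refine tsum_congr fun y => tsum_congr fun x => ?_
    rw [mul_assoc]
    simp only [cnt, Fin.sum_univ_succ, Fin.cons_zero, Fin.cons_succ, add_assoc]

lemma Q_succ_le {S : Type*} (P : S → S → ℝ≥0∞) (hP : ∀ x, ∑' y, P x y = 1)
    (ω : S → ℝ) (t : ℝ) (ℓ n : ℕ) (s : S) (c : ℕ) :
    Q P ω t ℓ (n + 1) s c ≤ Q P ω t ℓ n s c := by
  induction n generalizing s c with
  | zero =>
    calc Q P ω t ℓ (0 + 1) s c ≤ ∑' y, P s y * (if c ≤ ℓ then 1 else 0) := by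
          simp only [Q]
          refine ENNReal.tsum_le_tsum fun y => ?_
          gcongr
          by_cases h : c ≤ ℓ
          · simp only [h, if_true]; split_ifs <;> simp
          · rw [if_neg (by omega)]; simp
      _ = _ := by rw [ENNReal.tsum_mul_right, hP]; simp [Q]
  | succ n ih =>
    rw [Q, Q]
    refine ENNReal.tsum_le_tsum fun y => ?_
    gcongr
    exact ih _ _

lemma Q_anti {S : Type*} (P : S → S → ℝ≥0∞) (hP : ∀ x, ∑' y, P x y = 1)
    (ω : S → ℝ) (t : ℝ) (ℓ : ℕ) (s : S) (c : ℕ) {m n : ℕ} (h : m ≤ n) :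
    Q P ω t ℓ n s c ≤ Q P ω t ℓ m s c :=
  antitone_nat_of_succ_le (f := fun n => Q P ω t ℓ n s c)
    (fun n => Q_succ_le P hP ω t ℓ n s c) h

lemma Q_le_one {S : Type*} (P : S → S → ℝ≥0∞) (hP : ∀ x, ∑' y, P x y = 1)
    (ω : S → ℝ) (t : ℝ) (ℓ : ℕ) (s : S) (c n : ℕ) : Q P ω t ℓ n s c ≤ 1 := by
  refine (Q_anti P hP ω t ℓ s c (Nat.zero_le n)).trans ?_
  simp only [Q]; split_ifs <;> simp

lemma two_mul_le (a b : ℝ≥0∞) (ha : a ≤ 1) (hb : b ≤ 1) : 2 * a * b ≤ a ^ 2 + b ^ 2 := by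
  lift a to NNReal using ne_top_of_le_ne_top ENNReal.one_ne_top ha
  lift b to NNReal using ne_top_of_le_ne_top ENNReal.one_ne_top hb
  exact_mod_cast two_mul_le_add_sq a b

lemma sq_tsum_le {S : Type*} (π q : S → ℝ≥0∞) (hπ : ∑' x, π x = 1) (hq : ∀ x, q x ≤ 1) :
    (∑' x, π x * q x) ^ 2 ≤ ∑' x, π x * (q x * q x) := by
  set m := ∑' x, π x * q x with hm
  have hm1 : m ≤ 1 := by
    rw [hm, ← hπ]
    refine ENNReal.tsum_le_tsum fun x => ?_
    exact mul_le_of_le_one_right' (hq x)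
  have h : m ^ 2 + m ^ 2 ≤ m ^ 2 + ∑' x, π x * (q x * q x) := by
    calc m ^ 2 + m ^ 2 = ∑' x, π x * (2 * m * q x) := by
          rw [show (fun x => π x * (2 * m * q x)) = fun x => 2 * m * (π x * q x) by
            funext x; ring]
          rw [ENNReal.tsum_mul_left, ← hm]; ring
      _ ≤ ∑' x, π x * (m ^ 2 + q x ^ 2) := by
          refine ENNReal.tsum_le_tsum fun x => ?_
          gcongr
          exact two_mul_le _ _ hm1 (hq x)
      _ = _ := by
          simp only [mul_add, ENNReal.tsum_add, ENNReal.tsum_mul_right, hπ, one_mul, sq (q _)]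
  have hfin : m ^ 2 ≠ ⊤ := ENNReal.pow_ne_top (ne_top_of_le_ne_top ENNReal.one_ne_top hm1)
  exact (ENNReal.add_le_add_iff_left hfin).1 h

lemma prod_eq_W {S : Type*} (P : S → S → ℝ≥0∞) (n : ℕ) (c : ℕ → S) :
    ∏ i ∈ range n, P (c i) (c (i + 1)) = W P n (c 0) (fun i => c (i + 1)) := by
  induction n generalizing c with
  | zero => simp [W]
  | succ n ih =>
    rw [prod_range_succ', mul_comm, ih (fun i => c (i + 1))]
    simp [W]

/-- upper bound by countable subadditivity -/
lemma upper {Ω ι : Type*} [MeasurableSpace Ω] [Countable ι] (μ : Measure Ω)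
    (C : ι → Set Ω) (D : ι → Prop) [DecidablePred D] (F : Set Ω)
    (h : ∀ a ∈ F, ∃ i, D i ∧ a ∈ C i) :
    μ F ≤ ∑' i, μ (C i) * (if D i then 1 else 0) := by
  calc μ F ≤ μ (⋃ i, if D i then C i else ∅) := by
        apply measure_mono
        intro a ha
        obtain ⟨i, hD, hi⟩ := h a ha
        exact Set.mem_iUnion.2 ⟨i, by simpa [hD] using hi⟩
    _ ≤ ∑' i, μ (if D i then C i else ∅) := measure_iUnion_le _
    _ = _ := tsum_congr fun i => by split_ifs <;> simp

/-- lower bound, from the total mass being `1`; no measurability is needed -/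
lemma lower {Ω ι : Type*} [MeasurableSpace Ω] [Countable ι] (μ : Measure Ω)
    [IsProbabilityMeasure μ]
    (C : ι → Set Ω) (D : ι → Prop) [DecidablePred D] (F : Set Ω)
    (hcov : ∀ a, ∃ i, a ∈ C i) (htot : ∑' i, μ (C i) = 1)
    (h : ∀ i, D i → C i ⊆ F) :
    ∑' i, μ (C i) * (if D i then 1 else 0) ≤ μ F := by
  have h1 : μ Fᶜ ≤ ∑' i, μ (C i) * (if ¬ D i then 1 else 0) := by
    apply upper
    intro a ha
    obtain ⟨i, hi⟩ := hcov a
    exact ⟨i, fun hD => ha (h i hD hi), hi⟩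
  have hsum : ∑' i, μ (C i) * (if D i then 1 else 0)
      + ∑' i, μ (C i) * (if ¬ D i then 1 else 0) = 1 := by
    rw [← ENNReal.tsum_add]
    refine Eq.trans ?_ htot
    refine tsum_congr fun i => ?_
    by_cases hD : D i <;> simp only [hD, not_true, not_false_iff, if_true, if_false, mul_one, mul_zero, add_zero, zero_add]
  have h2 : (1 : ℝ≥0∞) ≤ μ F + μ Fᶜ := by
    rw [← measure_univ (μ := μ), ← Set.union_compl_self F]
    exact measure_union_le _ _
  set A := ∑' i, μ (C i) * (if D i then (1 : ℝ≥0∞) else 0)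
  set B := ∑' i, μ (C i) * (if ¬ D i then (1 : ℝ≥0∞) else 0)
  have hB : B ≠ ⊤ := ne_top_of_le_ne_top ENNReal.one_ne_top (hsum ▸ le_add_self)
  have : A + B ≤ μ F + B := by
    rw [hsum]; exact h2.trans (by gcongr)
  exact (ENNReal.add_le_add_iff_right hB).1 this

/-- the sequence `s, x 0, x 1, ...` -/
def sq {S : Type*} {n : ℕ} (s : S) (x : Fin n → S) (i : ℕ) : S :=
  match i with
  | 0 => s
  | i + 1 => if h : i < n then x ⟨i, h⟩ else s

lemma sq_succ {S : Type*} {n : ℕ} (s : S) (x : Fin n → S) (i : Fin n) :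
    sq s x (i + 1) = x i := by simp [sq]

/-- the two-sided path -/
def tw {S : Type*} {j m : ℕ} (s : S) (x : Fin j → S) (y : Fin m → S) (i : ℕ) : S :=
  if i ≤ j then sq s x (j - i) else sq s y (i - j)

lemma rev_prod {S : Type*} (π : S → ℝ≥0∞) (P : S → S → ℝ≥0∞)
    (hdb : ∀ x y, π x * P x y = π y * P y x) (z : ℕ → S) (j : ℕ) :
    π (z 0) * ∏ i ∈ range j, P (z i) (z (i + 1))
      = π (z j) * ∏ i ∈ range j, P (z (i + 1)) (z i) := by
  induction j with
  | zero => simp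
  | succ j ih =>
    rw [prod_range_succ, prod_range_succ, ← mul_assoc, ih, mul_right_comm, hdb]
    ring

lemma tw_left {S : Type*} {j m : ℕ} (s : S) (x : Fin j → S) (y : Fin m → S) (i : Fin j) :
    tw s x y (j - (i + 1)) = x i := by
  have := i.2
  rw [tw, if_pos (by omega), show j - (j - (i.1 + 1)) = i + 1 by omega, sq_succ]

lemma tw_mid {S : Type*} {j m : ℕ} (s : S) (x : Fin j → S) (y : Fin m → S) :
    tw s x y j = s := by
  simp [tw, sq]

lemma tw_right {S : Type*} {j m : ℕ} (s : S) (x : Fin j → S) (y : Fin m → S) (i : Fin m) :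
    tw s x y (j + (i + 1)) = y i := by
  rw [tw, if_neg (by omega), show j + (i.1 + 1) - j = i + 1 by omega, sq_succ]

lemma tw_weight {S : Type*} (π : S → ℝ≥0∞) (P : S → S → ℝ≥0∞)
    (hdb : ∀ x y, π x * P x y = π y * P y x) {j m : ℕ} (s : S) (x : Fin j → S) (y : Fin m → S) :
    π (tw s x y 0) * ∏ i ∈ range (j + m), P (tw s x y i) (tw s x y (i + 1))
      = π s * (W P j s x * W P m s y) := by
  rw [prod_range_add, ← mul_assoc, rev_prod π P hdb, mul_assoc, tw_mid]
  congr 2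
  · rw [← prod_range_reflect]
    have := prod_eq_W P j (fun i => tw s x y (j - i))
    simp only [tw_left, Nat.sub_zero, tw_mid] at this
    rw [← this]
    refine prod_congr rfl fun i hi => ?_
    have := mem_range.1 hi
    congr 2 <;> omega
  · have := prod_eq_W P m (fun i => tw s x y (j + i))
    simp only [tw_right, Nat.add_zero, tw_mid] at this
    rw [← this]
    rfl

lemma small_zero {Ω S : Type*} (X : ℕ → Ω → S) (ω : S → ℝ) (ℓ k : ℕ) (a : Ω) :
    IsSmallAt X ω 0 ℓ k a ↔ cnt ω (ω (X 0 a)) (fun i : Fin k => X (i + 1) a) ≤ ℓ := by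
  rw [IsSmallAt, card_filter, sum_range_succ', cnt, sum_range]
  simp

lemma small_mid {Ω S : Type*} (X : ℕ → Ω → S) (ω : S → ℝ) (ℓ j m : ℕ) (a : Ω)
    (h1 : cnt ω (ω (X j a)) (fun i : Fin j => X (j - (i + 1)) a) ≤ ℓ)
    (h2 : cnt ω (ω (X j a)) (fun i : Fin m => X (j + (i + 1)) a) ≤ ℓ) :
    IsSmallAt X ω j (2 * ℓ) (j + m) a := by
  rw [IsSmallAt, card_filter, add_assoc, sum_range_add, sum_range_succ', ← sum_range_reflect]
  have e1 : ∑ i ∈ range j, (if j - 1 - i ≠ j ∧ ω (X (j - 1 - i) a) ≤ ω (X j a) then 1 else 0)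
      = cnt ω (ω (X j a)) (fun i : Fin j => X (j - (i + 1)) a) := by
    rw [cnt, sum_range]
    refine sum_congr rfl fun i _ => ?_
    have := i.2
    rw [show j - 1 - i.1 = j - (i.1 + 1) by omega]
    have h : j - (i.1 + 1) ≠ j := by omega
    simp [h]
  have e2 : ∑ i ∈ range m, (if j + (i + 1) ≠ j ∧ ω (X (j + (i + 1)) a) ≤ ω (X j a) then 1 else 0)
      = cnt ω (ω (X j a)) (fun i : Fin m => X (j + (i + 1)) a) := by
    rw [cnt, sum_range]
    refine sum_congr rfl fun i _ => ?_
    simp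
  rw [e1, e2]
  simp
  omega

end SmallChain

open SmallChain

/-- Let `X 0, X 1, ...` be a stationary reversible Markov chain on a countable
state space `S` with reversible stationary distribution `π`, `X 0 ~ π`, and label function
`ω : S → ℝ`.  (Reversibility: for every `k`, the joint distribution of `(X 0, ..., X k)`
equals that of `(X k, ..., X 0)`.)  For `j ≤ k`, let `ρ_{j,ℓ}^k` be the (unconditional)
probability that `X j` is `ℓ`-small among `X 0, ..., X k`.  Then for every `j ≤ k` and every
`ℓ`, `ρ_{j,2ℓ}^k ≥ (ρ_{0,ℓ}^k)²`. -/
theorem prob_small_ge_sq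
    {Ω S : Type*} [MeasurableSpace Ω] [Countable S]
    (μ : Measure Ω) [IsProbabilityMeasure μ]
    (X : ℕ → Ω → S) (π : S → ℝ≥0∞) (P : S → S → ℝ≥0∞) (ω : S → ℝ)
    (hπ : ∑' x, π x = 1)
    (hProw : ∀ x, ∑' y, P x y = 1)
    -- the chain is the Markov chain with initial distribution `π` and transition matrix `P`
    (hjoint : ∀ (n : ℕ) (x : ℕ → S),
      μ {a | ∀ i ≤ n, X i a = x i} = π (x 0) * ∏ i ∈ Finset.range n, P (x i) (x (i + 1)))
    -- `π` is stationary
    (hstat : ∀ y, ∑' x, π x * P x y = π y)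
    -- reversibility: `(X 0, ..., X k)` and `(X k, ..., X 0)` have the same joint distribution
    (hrev : ∀ (n : ℕ) (x : ℕ → S),
      μ {a | ∀ i ≤ n, X i a = x i} = μ {a | ∀ i ≤ n, X i a = x (n - i)})
    (j ℓ k : ℕ) (hjk : j ≤ k) :
    (μ {a | IsSmallAt X ω 0 ℓ k a}) ^ 2 ≤ μ {a | IsSmallAt X ω j (2 * ℓ) k a} := by
  classical
  have hdb : ∀ x y, π x * P x y = π y * P y x := by
    intro x y
    have h := hrev 1 (fun i => if i = 0 then x else y)
    have h' := hjoint 1 (fun i => if (1 - i : ℕ) = 0 then x else y)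
    rw [hjoint] at h
    rw [h'] at h
    simpa using h
  obtain ⟨m, rfl⟩ := Nat.exists_eq_add_of_le hjk
  -- upper bound for the left side
  have hU : μ {a | IsSmallAt X ω 0 ℓ (j + m) a} ≤ ∑' s, π s * Q P ω (ω s) ℓ (j + m) s 0 := by
    refine (upper μ (fun p : S × (Fin (j + m) → S) => {a | ∀ i ≤ j + m, X i a = sq p.1 p.2 i})
      (fun p => cnt ω (ω p.1) p.2 ≤ ℓ) _ ?_).trans (le_of_eq ?_)
    · intro a ha
      refine ⟨(X 0 a, fun i => X (i + 1) a), (small_zero X ω ℓ _ a).1 ha, ?_⟩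
      intro i hi
      cases i with
      | zero => rfl
      | succ i => simp [SmallChain.sq, show i < j + m by omega]
    · rw [ENNReal.tsum_prod']
      refine tsum_congr fun s => ?_
      rw [← Q_eq, ← ENNReal.tsum_mul_left]
      refine tsum_congr fun x => ?_
      rw [hjoint, prod_eq_W]
      simp only [sq_succ, zero_add, mul_assoc]
      rfl
  -- lower bound for the right side
  have hL : ∑' s, π s * (Q P ω (ω s) ℓ j s 0 * Q P ω (ω s) ℓ m s 0)
      ≤ μ {a | IsSmallAt X ω j (2 * ℓ) (j + m) a} := by
    have key := lower μ (fun p : S × (Fin j → S) × (Fin m → S) =>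
      {a | ∀ i ≤ j + m, X i a = tw p.1 p.2.1 p.2.2 i})
      (fun p => cnt ω (ω p.1) p.2.1 ≤ ℓ ∧ cnt ω (ω p.1) p.2.2 ≤ ℓ)
      {a | IsSmallAt X ω j (2 * ℓ) (j + m) a} ?_ ?_ ?_
    · refine le_trans (le_of_eq ?_) key
      rw [ENNReal.tsum_prod']
      refine tsum_congr fun s => ?_
      rw [ENNReal.tsum_prod', ← Q_eq, ← Q_eq, ← ENNReal.tsum_mul_right, ← ENNReal.tsum_mul_left]
      refine tsum_congr fun x => ?_
      rw [← ENNReal.tsum_mul_left, ← ENNReal.tsum_mul_left]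
      refine tsum_congr fun y => ?_
      rw [hjoint, tw_weight π P hdb]
      by_cases h1 : cnt ω (ω s) x ≤ ℓ <;> by_cases h2 : cnt ω (ω s) y ≤ ℓ <;> simp [h1, h2]
    · intro a
      refine ⟨(X j a, fun i => X (j - (i + 1)) a, fun i => X (j + (i + 1)) a), ?_⟩
      intro i hi
      rcases lt_trichotomy i j with h | h | h
      · obtain ⟨d, rfl⟩ : ∃ d, i = j - (d + 1) := ⟨j - 1 - i, by omega⟩
        by_cases hd : d < j
        · exact (tw_left (X j a) (fun i : Fin j => X (j - (i + 1)) a)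
            (fun i : Fin m => X (j + (i + 1)) a) ⟨d, hd⟩).symm
        · have hd' : j - (d + 1) = j - ((j - 1) + 1) := by omega
          rw [hd']
          exact (tw_left (X j a) (fun i : Fin j => X (j - (i + 1)) a)
            (fun i : Fin m => X (j + (i + 1)) a) ⟨j - 1, by omega⟩).symm
      · subst h; exact (tw_mid _ _ _).symm
      · obtain ⟨d, rfl⟩ : ∃ d, i = j + (d + 1) := ⟨i - j - 1, by omega⟩
        exact (tw_right (X j a) (fun i : Fin j => X (j - (i + 1)) a)
          (fun i : Fin m => X (j + (i + 1)) a) ⟨d, by omega⟩).symm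
    · simp only [hjoint, tw_weight π P hdb]
      rw [ENNReal.tsum_prod']
      simp only [ENNReal.tsum_prod', ENNReal.tsum_mul_left, tsum_W P hProw, mul_one, hπ]
    · rintro ⟨s, x, y⟩ ⟨h1, h2⟩ a ha
      simp only [Set.mem_ofPred_eq] at ha ⊢
      have hj : X j a = s := by rw [ha j (by omega), tw_mid]
      apply small_mid
      · rw [hj]
        convert h1 using 2
        funext i
        rw [ha _ (by omega), tw_left]
      · rw [hj]
        convert h2 using 2
        funext i
        rw [ha _ (by omega), tw_right]
  calc _ ≤ (∑' s, π s * Q P ω (ω s) ℓ (j + m) s 0) ^ 2 := by gcongr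
    _ ≤ ∑' s, π s * (Q P ω (ω s) ℓ (j + m) s 0 * Q P ω (ω s) ℓ (j + m) s 0) :=
      sq_tsum_le _ _ hπ fun s => Q_le_one P hProw _ _ _ _ _ _
    _ ≤ _ := by
      refine ENNReal.tsum_le_tsum fun s => ?_
      gcongr
      · exact Q_anti P hProw _ _ _ _ _ (by omega)
      · exact Q_anti P hProw _ _ _ _ _ (by omega)
    _ ≤ _ := hL
end

section
/- Let X_0, X_1, ... be a stationary reversible Markov chain on a countable state space S with reversible stationary distribution π, X_0 ~ π, and label function ω : S → ℝ. For ℓ, k ∈ ℕ, let ρ_{0,ℓ}^k denote the probability that X_0 is ℓ-small among X_0, ..., X_k. Then (k+1)·(ρ_{0,ℓ}^k)^2 ≤ 2ℓ + 1; equivalently, ρ_{0,ℓ}^k ≤ √((2ℓ+1)/(k+1)). -/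
open MeasureTheory Finset
open scoped ENNReal

namespace PS

open Classical in
/-- Expectation of `F [X 1, ..., X n]` for the chain started at `x`. -/
noncomputable def E {S : Type*} (P : S → S → ℝ≥0∞) : ℕ → S → (List S → ℝ≥0∞) → ℝ≥0∞
  | 0, _, F => F []
  | n + 1, x, F => ∑' y, P x y * E P n y (fun l => F (y :: l))

variable {S : Type*} (P : S → S → ℝ≥0∞)

lemma E_mono (n : ℕ) : ∀ (x : S) (F G : List S → ℝ≥0∞),
    (∀ l, l.length = n → F l ≤ G l) → E P n x F ≤ E P n x G := by
  induction n with
  | zero => intro x F G h; exact h [] rfl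
  | succ n ih =>
    intro x F G h
    refine ENNReal.tsum_le_tsum fun y => ?_
    gcongr
    exact ih _ _ _ fun l hl => h _ (by simp [hl])

lemma E_const (hP : ∀ x, ∑' y, P x y = 1) (n : ℕ) : ∀ (x : S) (c : ℝ≥0∞),
    E P n x (fun _ => c) = c := by
  induction n with
  | zero => intro x c; rfl
  | succ n ih =>
    intro x c
    simp only [E, ih, ENNReal.tsum_mul_right, hP, one_mul]

lemma E_mul_left (n : ℕ) : ∀ (x : S) (c : ℝ≥0∞) (F : List S → ℝ≥0∞),
    E P n x (fun l => c * F l) = c * E P n x F := by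
  induction n with
  | zero => intro x c F; rfl
  | succ n ih =>
    intro x c F
    simp only [E, ih, ← ENNReal.tsum_mul_left]
    exact tsum_congr fun y => by ring

lemma E_mul_right (n : ℕ) (x : S) (c : ℝ≥0∞) (F : List S → ℝ≥0∞) :
    E P n x (fun l => F l * c) = E P n x F * c := by
  simp only [mul_comm _ c, E_mul_left]

lemma E_tsum {ι : Type*} (n : ℕ) : ∀ (x : S) (F : ι → List S → ℝ≥0∞),
    E P n x (fun l => ∑' i, F i l) = ∑' i, E P n x (F i) := by
  induction n with
  | zero => intro x F; rfl
  | succ n ih =>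
    intro x F
    simp only [E, ih, ← ENNReal.tsum_mul_left]
    exact ENNReal.tsum_comm

lemma E_sum {ι : Type*} (s : Finset ι) (n : ℕ) : ∀ (x : S) (F : ι → List S → ℝ≥0∞),
    E P n x (fun l => ∑ i ∈ s, F i l) = ∑ i ∈ s, E P n x (F i) := by
  intro x F
  have := E_tsum P n x (fun (i : s) => F i)
  simp only [tsum_fintype] at this
  rw [← Finset.sum_coe_sort s, ← this]
  congr 1
  ext l
  rw [← Finset.sum_coe_sort s]

lemma E_succ_le (hP : ∀ x, ∑' y, P x y = 1) (n : ℕ) : ∀ (x : S) (F : List S → ℝ≥0∞),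
    (∀ l y, F (l ++ [y]) ≤ F l) → E P (n + 1) x F ≤ E P n x F := by
  induction n with
  | zero =>
    intro x F h
    calc E P 1 x F = ∑' y, P x y * F [y] := rfl
      _ ≤ ∑' y, P x y * F [] := by
        refine ENNReal.tsum_le_tsum fun y => ?_
        gcongr
        exact h [] y
      _ = F [] := by rw [ENNReal.tsum_mul_right, hP, one_mul]
  | succ n ih =>
    intro x F h
    refine ENNReal.tsum_le_tsum fun y => ?_
    gcongr
    exact ih y (fun l => F (y :: l)) fun l z => h (y :: l) z

/-- Two-sided expectation. -/
noncomputable def Z (π : S → ℝ≥0∞) (j m : ℕ) (H : List S → S → List S → ℝ≥0∞) : ℝ≥0∞ :=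
  ∑' x, π x * E P j x (fun p => E P m x (H p x))

lemma Z_shift (π : S → ℝ≥0∞) (hdb : ∀ x y, π x * P x y = π y * P y x) (K : List S → ℝ≥0∞)
    (j : ℕ) : ∀ m, Z P π j m (fun p x q => K (p.reverse ++ x :: q))
      = Z P π 0 (j + m) (fun _ x q => K (x :: q)) := by
  induction j with
  | zero => intro m; simp [Z, E]
  | succ j ih =>
    intro m
    rw [show j + 1 + m = j + (m + 1) by ring, ← ih (m + 1)]
    simp only [Z, E, ← ENNReal.tsum_mul_left, E_tsum, E_mul_left]
    rw [ENNReal.tsum_comm]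
    refine tsum_congr fun y => tsum_congr fun x => ?_
    rw [← mul_assoc, ← mul_assoc, hdb x y]
    simp

lemma sum_count (p : S → Bool) (L : List S) :
    ∑ i ∈ Finset.range L.length, (if (∃ s, L[i]? = some s ∧ p s = true) then 1 else 0)
      = L.countP p := by
  induction L with
  | nil => simp
  | cons a L ih =>
    rw [List.length_cons, Finset.sum_range_succ', List.countP_cons]
    simp only [List.getElem?_cons_succ, List.getElem?_cons_zero]
    rw [ih]
    simp

lemma card_small (ω : S → ℝ) (L : List S) (c : ℕ) :
    ∑ j ∈ Finset.range L.length, (if (∃ s, L[j]? = some s ∧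
      L.countP (fun y => decide (ω y ≤ ω s)) ≤ c) then 1 else 0) ≤ c := by
  rw [← Finset.card_filter]
  suffices aux : ∀ B : Finset ℕ, (∀ j ∈ B, j ∈ Finset.range L.length ∧ ∃ s, L[j]? = some s ∧
      L.countP (fun y => decide (ω y ≤ ω s)) ≤ c) → B.card ≤ c from
    aux _ fun j hj => Finset.mem_filter.1 hj
  intro B hB
  rcases B.eq_empty_or_nonempty with h | h
  · simp [h]
  obtain ⟨j, hj, hmax⟩ := B.exists_max_image (fun j => (L[j]?.map ω).getD 0) h
  obtain ⟨hj1, s, hs, hc⟩ := hB j hj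
  refine le_trans ?_ hc
  rw [← sum_count, ← Finset.card_filter]
  refine Finset.card_le_card fun i hi => ?_
  obtain ⟨hi1, t, ht, hc'⟩ := hB i hi
  refine Finset.mem_filter.2 ⟨hi1, t, ht, ?_⟩
  have := hmax i hi
  simpa [hs, ht] using this

lemma two_mul_le (a b : ℝ≥0∞) : 2 * (a * b) ≤ a ^ 2 + b ^ 2 := by
  induction a with
  | top => simp
  | coe a =>
    induction b with
    | top => simp
    | coe b =>
      norm_cast
      have := two_mul_le_add_sq a b
      rwa [mul_assoc] at this

lemma jensen (π r : S → ℝ≥0∞) (hπ : ∑' x, π x = 1) :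
    (∑' x, π x * r x) ^ 2 ≤ ∑' x, π x * (r x) ^ 2 := by
  have h : 2 * (∑' x, π x * r x) ^ 2 ≤ 2 * ∑' x, π x * (r x) ^ 2 := by
    calc 2 * (∑' x, π x * r x) ^ 2 = ∑' x, ∑' y, π x * π y * (2 * (r x * r y)) := by
          rw [sq, ← ENNReal.tsum_mul_right, ← ENNReal.tsum_mul_left]
          refine tsum_congr fun x => ?_
          rw [← ENNReal.tsum_mul_left, ← ENNReal.tsum_mul_left]
          exact tsum_congr fun y => by ring
      _ ≤ ∑' x, ∑' y, π x * π y * ((r x) ^ 2 + (r y) ^ 2) := by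
          refine ENNReal.tsum_le_tsum fun x => ENNReal.tsum_le_tsum fun y => ?_
          gcongr
          exact two_mul_le _ _
      _ = ∑' x, (π x * (r x) ^ 2 * ∑' y, π y + π x * ∑' y, π y * (r y) ^ 2) := by
          refine tsum_congr fun x => ?_
          rw [← ENNReal.tsum_mul_left, ← ENNReal.tsum_mul_left, ← ENNReal.tsum_add]
          exact tsum_congr fun y => by ring
      _ = 2 * ∑' x, π x * (r x) ^ 2 := by
          rw [ENNReal.tsum_add, ENNReal.tsum_mul_right, ENNReal.tsum_mul_right, hπ]
          simp [two_mul]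
  exact (ENNReal.mul_le_mul_iff_right (by simp) (by simp)).1 h

open Classical in
lemma meas_le {Ω : Type*} [MeasurableSpace Ω] [Countable S] (μ : Measure Ω)
    (X : ℕ → Ω → S) (π : S → ℝ≥0∞)
    (hjoint : ∀ (n : ℕ) (x : ℕ → S),
      μ {a | ∀ i ≤ n, X i a = x i} = π (x 0) * ∏ i ∈ Finset.range n, P (x i) (x (i + 1)))
    (m : ℕ) : ∀ (n : ℕ) (x : ℕ → S) (A : List S → Prop),
      μ {a | (∀ i ≤ n, X i a = x i) ∧ A ((List.range' (n + 1) m).map (fun i => X i a))}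
      ≤ (π (x 0) * ∏ i ∈ Finset.range n, P (x i) (x (i + 1)))
        * E P m (x n) (fun l => if A l then 1 else 0) := by
  induction m with
  | zero =>
    intro n x A
    by_cases h : A []
    · simp [E, h, hjoint]
    · simp [E, h]
  | succ m ih =>
    intro n x A
    let u : S → ℕ → S := fun y => Function.update x (n + 1) y
    have hu : ∀ y i, i ≤ n → u y i = x i := fun y i hi => by
      simp only [u]; rw [Function.update_of_ne (by omega)]
    have hu' : ∀ y, u y (n + 1) = y := fun y => by simp [u]
    calc _ ≤ μ (⋃ y, {a | (∀ i ≤ n + 1, X i a = u y i) ∧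
              A (y :: (List.range' (n + 1 + 1) m).map (fun i => X i a))}) := by
            refine measure_mono fun a ha => ?_
            obtain ⟨h1, h2⟩ := ha
            refine Set.mem_iUnion.2 ⟨X (n + 1) a, ?_, ?_⟩
            · intro i hi
              rcases Nat.lt_or_ge n i with h | h
              · obtain rfl : i = n + 1 := by omega
                rw [hu']
              · rw [hu _ _ h, h1 i h]
            · simpa [List.range'_succ] using h2
      _ ≤ _ := measure_iUnion_le _
      _ ≤ ∑' y, _ := ENNReal.tsum_le_tsum fun y => ih (n + 1) (u y) (fun l => A (y :: l))
      _ = _ := by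
            simp only [E]
            rw [← ENNReal.tsum_mul_left]
            refine tsum_congr fun y => ?_
            rw [Finset.prod_range_succ, hu', hu y 0 (by omega), hu y n le_rfl]
            rw [Finset.prod_congr rfl (g := fun i => P (x i) (x (i + 1)))]
            · ring
            · intro i hi
              have := Finset.mem_range.1 hi
              rw [hu y i (by omega), hu y (i + 1) (by omega)]

open Classical in
/-- probability that the start `x` is `ℓ`-small. -/
noncomputable def r (ω : S → ℝ) (ℓ n : ℕ) (x : S) : ℝ≥0∞ :=
  E P n x (fun l => if l.countP (fun y => decide (ω y ≤ ω x)) ≤ ℓ then 1 else 0)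

lemma r_anti (hP : ∀ x, ∑' y, P x y = 1) (ω : S → ℝ) (ℓ : ℕ) (x : S) :
    Antitone (fun n => r P ω ℓ n x) := by
  refine antitone_nat_of_succ_le fun n => E_succ_le P hP n x _ fun l y => ?_
  split_ifs with h1 h2 <;> try simp
  rw [List.countP_append] at h1
  omega

lemma small_countP {Ω : Type*} (X : ℕ → Ω → S) (ω : S → ℝ) (ℓ k : ℕ) (a : Ω)
    (h : IsSmallAt X ω 0 ℓ k a) :
    ((List.range' (0 + 1) k).map (fun i => X i a)).countP
      (fun y => decide (ω y ≤ ω (X 0 a))) ≤ ℓ := by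
  refine le_trans ?_ h
  rw [List.countP_map, List.countP_eq_length_filter,
    ← List.toFinset_card_of_nodup (List.Nodup.filter _ List.nodup_range')]
  refine Finset.card_le_card fun i hi => ?_
  simp at hi ⊢
  refine ⟨by omega, by omega, hi.2⟩

lemma rho_le {Ω : Type*} [MeasurableSpace Ω] [Countable S] (μ : Measure Ω)
    (X : ℕ → Ω → S) (π : S → ℝ≥0∞) (ω : S → ℝ)
    (hjoint : ∀ (n : ℕ) (x : ℕ → S),
      μ {a | ∀ i ≤ n, X i a = x i} = π (x 0) * ∏ i ∈ Finset.range n, P (x i) (x (i + 1)))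
    (ℓ k : ℕ) : μ {a | IsSmallAt X ω 0 ℓ k a} ≤ ∑' x, π x * r P ω ℓ k x := by
  calc _ ≤ μ (⋃ x, {a | (∀ i ≤ 0, X i a = (fun _ => x : ℕ → S) i) ∧
            ((List.range' (0 + 1) k).map (fun i => X i a)).countP
              (fun y => decide (ω y ≤ ω x)) ≤ ℓ}) := by
          refine measure_mono fun a ha => ?_
          refine Set.mem_iUnion.2 ⟨X 0 a, ?_, small_countP X ω ℓ k a ha⟩
          intro i hi
          obtain rfl : i = 0 := by omega
          rfl
    _ ≤ _ := measure_iUnion_le _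
    _ ≤ _ := by
          refine ENNReal.tsum_le_tsum fun x => ?_
          have := meas_le P μ X π hjoint k 0 (fun _ => x)
            (fun l => l.countP (fun y => decide (ω y ≤ ω x)) ≤ ℓ)
          simp only [r]
          convert this using 1
          simp only [Finset.range_zero, Finset.prod_empty, mul_one]
          congr! 4

lemma main_bound (π : S → ℝ≥0∞) (ω : S → ℝ) (hπ : ∑' x, π x = 1)
    (hP : ∀ x, ∑' y, P x y = 1) (hdb : ∀ x y, π x * P x y = π y * P y x) (ℓ k : ℕ) :
    ((k : ℝ≥0∞) + 1) * (∑' x, π x * r P ω ℓ k x) ^ 2 ≤ 2 * ℓ + 1 := by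
  classical
  let K : ℕ → List S → ℝ≥0∞ := fun j L => if (∃ s, L[j]? = some s ∧
      L.countP (fun y => decide (ω y ≤ ω s)) ≤ 2 * ℓ + 1) then 1 else 0
  have h1 : ∀ j ∈ Finset.range (k + 1), (∑' x, π x * r P ω ℓ k x) ^ 2
      ≤ Z P π 0 k (fun _ x q => K j (x :: q)) := by
    intro j hj
    have hj := Finset.mem_range.1 hj
    calc _ ≤ ∑' x, π x * (r P ω ℓ k x) ^ 2 := jensen _ _ hπ
      _ ≤ ∑' x, π x * (r P ω ℓ j x * r P ω ℓ (k - j) x) := by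
          refine ENNReal.tsum_le_tsum fun x => ?_
          rw [sq]
          gcongr
          · exact r_anti P hP ω ℓ x (by omega)
          · exact r_anti P hP ω ℓ x (by omega)
      _ ≤ Z P π j (k - j) (fun p x q => K j (p.reverse ++ x :: q)) := by
          refine ENNReal.tsum_le_tsum fun x => ?_
          gcongr
          rw [r, r, ← E_mul_right]
          refine E_mono P _ _ _ _ fun p hp => ?_
          rw [← E_mul_left]
          refine E_mono P _ _ _ _ fun q hq => ?_
          by_cases hp' : p.countP (fun y => decide (ω y ≤ ω x)) ≤ ℓ
          · by_cases hq' : q.countP (fun y => decide (ω y ≤ ω x)) ≤ ℓ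
            · have : K j (p.reverse ++ x :: q) = 1 := by
                refine if_pos ⟨x, ?_, ?_⟩
                · rw [List.getElem?_append_right (by simp [hp])]
                  simp [hp]
                · rw [List.countP_append, List.countP_reverse, List.countP_cons]
                  simp
                  omega
              rw [if_pos hp', if_pos hq', one_mul]
              exact this.ge
            · simp [hq']
          · simp [hp']
      _ = _ := by
          rw [Z_shift P π hdb, Nat.add_sub_cancel' (by omega)]
  calc ((k : ℝ≥0∞) + 1) * (∑' x, π x * r P ω ℓ k x) ^ 2
      = ∑ j ∈ Finset.range (k + 1), (∑' x, π x * r P ω ℓ k x) ^ 2 := by simp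
    _ ≤ ∑ j ∈ Finset.range (k + 1), Z P π 0 k (fun _ x q => K j (x :: q)) :=
        Finset.sum_le_sum h1
    _ = ∑' x, π x * E P k x (fun q => ∑ j ∈ Finset.range (k + 1), K j (x :: q)) := by
        simp only [Z, E, E_sum, Finset.mul_sum]
        rw [Summable.tsum_finsetSum]
        intros; exact ENNReal.summable
    _ ≤ ∑' x, π x * E P k x (fun q => 2 * ℓ + 1) := by
        refine ENNReal.tsum_le_tsum fun x => ?_
        gcongr
        refine E_mono P _ _ _ _ fun q hq => ?_
        have := card_small ω (x :: q) (2 * ℓ + 1)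
        rw [List.length_cons, hq] at this
        simp only [K]
        exact_mod_cast this
    _ = 2 * ℓ + 1 := by simp [E_const P hP, ENNReal.tsum_mul_right, hπ]

end PS

/-- Let `X 0, X 1, ...` be a stationary reversible Markov chain on a countable
state space `S` with reversible stationary distribution `π`, `X 0 ~ π`, and label function
`ω : S → ℝ`.  (Reversibility: for every `k`, the joint distribution of `(X 0, ..., X k)`
equals that of `(X k, ..., X 0)`.)  Let `ρ_{0,ℓ}^k` be the probability that `X 0` is `ℓ`-small
among `X 0, ..., X k`.  Then `(k+1) · (ρ_{0,ℓ}^k)² ≤ 2ℓ + 1`; equivalently,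
`ρ_{0,ℓ}^k ≤ √((2ℓ+1)/(k+1))`. -/
theorem prob_small_le_sqrt
    {Ω S : Type*} [MeasurableSpace Ω] [Countable S]
    (μ : Measure Ω) [IsProbabilityMeasure μ]
    (X : ℕ → Ω → S) (π : S → ℝ≥0∞) (P : S → S → ℝ≥0∞) (ω : S → ℝ)
    (hπ : ∑' x, π x = 1)
    (hProw : ∀ x, ∑' y, P x y = 1)
    -- the chain is the Markov chain with initial distribution `π` and transition matrix `P`
    (hjoint : ∀ (n : ℕ) (x : ℕ → S),
      μ {a | ∀ i ≤ n, X i a = x i} = π (x 0) * ∏ i ∈ Finset.range n, P (x i) (x (i + 1)))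
    -- `π` is stationary
    (hstat : ∀ y, ∑' x, π x * P x y = π y)
    -- reversibility: `(X 0, ..., X k)` and `(X k, ..., X 0)` have the same joint distribution
    (hrev : ∀ (n : ℕ) (x : ℕ → S),
      μ {a | ∀ i ≤ n, X i a = x i} = μ {a | ∀ i ≤ n, X i a = x (n - i)})
    (ℓ k : ℕ) :
    ((k : ℝ≥0∞) + 1) * (μ {a | IsSmallAt X ω 0 ℓ k a}) ^ 2 ≤ 2 * ℓ + 1
    ∧ (μ {a | IsSmallAt X ω 0 ℓ k a}).toReal
        ≤ Real.sqrt ((2 * ℓ + 1) / (k + 1)) := by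
  have hdb : ∀ x y, π x * P x y = π y * P y x := by
    intro x y
    have h := hrev 1 (fun i => if i = 0 then x else y)
    have h2 := hjoint 1 (fun i => if i = 0 then y else x)
    have h3 : {a | ∀ i ≤ 1, X i a = (fun i => if i = 0 then x else y) (1 - i)}
        = {a | ∀ i ≤ 1, X i a = (fun i => if i = 0 then y else x) i} := by
      ext a
      refine forall_congr' fun i => forall_congr' fun hi => ?_
      interval_cases i <;> simp
    rw [h3, h2, hjoint] at h
    simpa using h
  have hmain : ((k : ℝ≥0∞) + 1) * (μ {a | IsSmallAt X ω 0 ℓ k a}) ^ 2 ≤ 2 * ℓ + 1 := by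
    refine le_trans ?_ (PS.main_bound P π ω hπ hProw hdb ℓ k)
    gcongr
    exact PS.rho_le P μ X π ω hjoint ℓ k
  refine ⟨hmain, ?_⟩
  apply Real.le_sqrt_of_sq_le
  rw [le_div_iff₀ (by positivity), mul_comm]
  have h := ENNReal.toReal_mono (by finiteness) hmain
  have e1 : ((k : ℝ≥0∞) + 1).toReal = (k : ℝ) + 1 := by
    rw [ENNReal.toReal_add (by simp) (by simp)]; simp
  have e2 : (2 * (ℓ : ℝ≥0∞) + 1).toReal = 2 * (ℓ : ℝ) + 1 := by
    rw [ENNReal.toReal_add (by finiteness) (by simp)]; simp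
  rwa [ENNReal.toReal_mul, ENNReal.toReal_pow, e1, e2] at h
end

section
/- Let X_0, X_1, ... be a Markov chain on a finite state space S with transition matrix P, reversible with respect to a stationary distribution π with π(s) > 0 for all s ∈ S, and let ω : S → ℝ be a label function. Let β ∈ [0,1) be such that for every function f : S → ℝ with Σ_s π(s) f(s) = 0 one has Σ_{s,t} π(s) P(s,t) f(s) f(t) ≤ β · Σ_s π(s) f(s)^2 (i.e., β upper-bounds the second eigenvalue λ_2 of P), and set τ_2 = 1/(1 − β) and π_min = min_s π(s). Fix σ_0 ∈ S and ε ∈ (0,1) such that π({σ : ω(σ) ≤ ω(σ_0)}) ≤ ε. Then for the chain started at X_0 = σ_0, the probability that ω(σ_0) is a 2ε-outlier among ω(X_0), ω(X_1), ..., ω(X_k) is at least 1 − (1 + εk/(10τ_2)) · (1/√π_min) · exp(−ε²k/(20τ_2)). -/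
open scoped Classical

open MeasureTheory Finset
open scoped ENNReal

/-- Quadratic form bound. -/
theorem quad_upper {S : Type*} [Fintype S] (P : S → S → ℝ) (π : S → ℝ)
    (hProw : ∀ s, ∑ t, P s t = 1)
    (hπpos : ∀ s, 0 < π s) (hπsum : ∑ s, π s = 1)
    (hrev : ∀ s t, π s * P s t = π t * P t s)
    (β : ℝ) (hβ1 : β < 1)
    (hgap : ∀ f : S → ℝ, (∑ s, π s * f s = 0) →
      ∑ s, ∑ t, π s * P s t * f s * f t ≤ β * ∑ s, π s * f s ^ 2)
    (l : ℝ) (q v : S → ℝ) (hv : ∀ s, 0 < v s)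
    (hq : ∀ s, (1 - β) * v s = l * q s - β) (hsum : ∑ s, π s / v s ≤ 1) (g : S → ℝ) :
    ∑ s, ∑ t, π s * P s t * g s * g t ≤ l * ∑ s, π s * q s * g s ^ 2 := by
  set m := ∑ s, π s * g s with hm
  have h0 : ∑ s, π s * (g s - m) = 0 := by
    simp only [mul_sub, Finset.sum_sub_distrib, ← Finset.sum_mul, hπsum, ← hm]; ring
  have h1 := hgap (fun s => g s - m) h0
  have hsq : ∑ s, π s * (g s - m) ^ 2 = ∑ s, π s * g s ^ 2 - m ^ 2 := by
    have : ∀ s, π s * (g s - m) ^ 2 = π s * g s ^ 2 - 2 * m * (π s * g s) + m ^ 2 * π s := by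
      intro s; ring
    simp only [this, Finset.sum_add_distrib, Finset.sum_sub_distrib, ← Finset.mul_sum, hπsum, ← hm]
    ring
  have hA : ∑ s, ∑ t, π s * P s t * g s = m := by
    rw [hm]; refine Finset.sum_congr rfl fun s _ => ?_
    calc ∑ t, π s * P s t * g s = π s * g s * ∑ t, P s t := by
          rw [Finset.mul_sum]; exact Finset.sum_congr rfl fun t _ => by ring
      _ = _ := by rw [hProw, mul_one]
  have hB : ∑ s, ∑ t, π s * P s t * g t = m := by
    rw [Finset.sum_comm, ← hA]
    exact Finset.sum_congr rfl fun s _ => Finset.sum_congr rfl fun t _ => by rw [hrev]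
  have hC : ∑ s, ∑ t, π s * P s t = 1 := by
    simp only [← Finset.mul_sum, hProw, mul_one, hπsum]
  have hquad : ∑ s, ∑ t, π s * P s t * (g s - m) * (g t - m)
      = ∑ s, ∑ t, π s * P s t * g s * g t - m ^ 2 := by
    have : ∀ s t, π s * P s t * (g s - m) * (g t - m) = π s * P s t * g s * g t
        - m * (π s * P s t * g s) - m * (π s * P s t * g t) + m ^ 2 * (π s * P s t) := by
      intro s t; ring
    simp only [this, Finset.sum_add_distrib, Finset.sum_sub_distrib, ← Finset.mul_sum]
    simp only [← Finset.mul_sum] at hA hB hC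
    rw [hA, hB, hC]; ring
  rw [hsq, hquad] at h1
  have hcs : m ^ 2 ≤ (∑ s, π s * v s * g s ^ 2) * ∑ s, π s / v s := by
    rw [hm]
    apply Finset.sum_sq_le_sum_mul_sum_of_sq_le_mul
    · intro s _; have := hπpos s; have := hv s; positivity
    · intro s _; have := hπpos s; have := hv s; positivity
    · intro s _; have := hv s; apply le_of_eq; field_simp
  have hnn : 0 ≤ ∑ s, π s * v s * g s ^ 2 :=
    Finset.sum_nonneg fun s _ => by have := hπpos s; have := hv s; positivity
  have hcs2 : m ^ 2 ≤ ∑ s, π s * v s * g s ^ 2 :=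
    hcs.trans (mul_le_of_le_one_right hnn hsum)
  have hcomb : (1 - β) * ∑ s, π s * v s * g s ^ 2
      = l * ∑ s, π s * q s * g s ^ 2 - β * ∑ s, π s * g s ^ 2 := by
    simp only [Finset.mul_sum, ← Finset.sum_sub_distrib]
    refine Finset.sum_congr rfl fun s _ => ?_
    have := hq s
    linear_combination (π s * g s ^ 2) * this
  nlinarith [mul_le_mul_of_nonneg_left hcs2 (sub_nonneg.2 hβ1.le)]

/-- Operator norm bound for the weighted operator. -/
theorem op_bound {S : Type*} [Fintype S] (P : S → S → ℝ) (π : S → ℝ)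
    (hPnonneg : ∀ s t, 0 ≤ P s t) (hπpos : ∀ s, 0 < π s)
    (hrev : ∀ s t, π s * P s t = π t * P t s)
    (l : ℝ) (hl : 0 < l) (w : S → ℝ) (hw : ∀ s, 0 < w s)
    (hquad : ∀ g : S → ℝ,
      ∑ s, ∑ t, π s * P s t * g s * g t ≤ l * ∑ s, π s * (w s)⁻¹ * g s ^ 2) (u : S → ℝ) :
    ∑ s, π s * (w s)⁻¹ * (w s * ∑ t, P s t * u t) ^ 2
      ≤ l ^ 2 * ∑ s, π s * (w s)⁻¹ * u s ^ 2 := by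
  have hneg : ∀ g : S → ℝ,
      -∑ s, ∑ t, π s * P s t * g s * g t ≤ l * ∑ s, π s * (w s)⁻¹ * g s ^ 2 := by
    intro g
    have h := hquad (fun s => |g s|)
    simp only [sq_abs] at h
    refine le_trans ?_ h
    rw [← Finset.sum_neg_distrib]
    refine Finset.sum_le_sum fun s _ => ?_
    rw [← Finset.sum_neg_distrib]
    refine Finset.sum_le_sum fun t _ => ?_
    have h1 : -(g s * g t) ≤ |g s| * |g t| := by rw [← abs_mul]; exact neg_le_abs _
    have h2 := mul_le_mul_of_nonneg_left h1 (mul_nonneg (hπpos s).le (hPnonneg s t))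
    nlinarith
  set V : S → ℝ := fun s => w s * ∑ t, P s t * u t with hV
  set B : ℝ := ∑ s, π s * (w s)⁻¹ * V s ^ 2 with hBdef
  set A : ℝ := ∑ s, π s * (w s)⁻¹ * u s ^ 2 with hAdef
  have hcross : ∑ s, ∑ t, π s * P s t * V s * u t = B := by
    rw [hBdef]
    refine Finset.sum_congr rfl fun s _ => ?_
    have e : ∑ t, π s * P s t * V s * u t = π s * V s * ∑ t, P s t * u t := by
      rw [Finset.mul_sum]; exact Finset.sum_congr rfl fun t _ => by ring
    have hV' : V s = w s * ∑ t, P s t * u t := rfl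
    have hw' := (hw s).ne'
    have : ∑ t, P s t * u t = (w s)⁻¹ * V s := by rw [hV']; field_simp
    rw [e, this]; ring
  have hcross' : ∑ s, ∑ t, π s * P s t * u s * V t = B := by
    rw [← hcross, Finset.sum_comm]
    exact Finset.sum_congr rfl fun s _ => Finset.sum_congr rfl fun t _ => by rw [hrev]; ring
  have h1 := hquad (fun s => l * u s + V s)
  have h2 := hneg (fun s => l * u s - V s)
  set Q1 := ∑ s, ∑ t, π s * P s t * u s * u t with hQ1
  set Q2 := ∑ s, ∑ t, π s * P s t * V s * V t with hQ2
  have e1 : ∑ s, ∑ t, π s * P s t * (l * u s + V s) * (l * u t + V t)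
      = l ^ 2 * Q1 + l * B + l * B + Q2 := by
    nth_rewrite 1 [← hcross]
    rw [← hcross', hQ1, hQ2]
    simp only [Finset.mul_sum, ← Finset.sum_add_distrib]
    exact Finset.sum_congr rfl fun s _ => Finset.sum_congr rfl fun t _ => by ring
  have e2 : ∑ s, ∑ t, π s * P s t * (l * u s - V s) * (l * u t - V t)
      = l ^ 2 * Q1 - l * B - l * B + Q2 := by
    nth_rewrite 1 [← hcross]
    rw [← hcross', hQ1, hQ2]
    simp only [Finset.mul_sum, ← Finset.sum_add_distrib, ← Finset.sum_sub_distrib]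
    exact Finset.sum_congr rfl fun s _ => Finset.sum_congr rfl fun t _ => by ring
  have e3 : ∑ s, π s * (w s)⁻¹ * (l * u s + V s) ^ 2 + ∑ s, π s * (w s)⁻¹ * (l * u s - V s) ^ 2
      = 2 * (l ^ 2 * A) + 2 * B := by
    rw [hAdef, hBdef]
    simp only [Finset.mul_sum, ← Finset.sum_add_distrib]
    exact Finset.sum_congr rfl fun s _ => by ring
  rw [e1] at h1; rw [e2] at h2
  have h3 : l * (4 * B) ≤ l * (2 * (l ^ 2 * A) + 2 * B) := by rw [← e3]; linarith
  have := le_of_mul_le_mul_left h3 hl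
  linarith

/-- Feynman-Kac iterates. -/
noncomputable def fkIter {S : Type*} [Fintype S] (P : S → S → ℝ) (w : S → ℝ) : ℕ → S → ℝ
  | 0 => w
  | n + 1 => fun s => w s * ∑ t, P s t * fkIter P w n t

theorem fk_paths {S : Type*} [Fintype S] (P : S → S → ℝ) (w : S → ℝ) (n : ℕ) : ∀ σ : S,
    ∑ s : Fin (n + 1) → S, (if s 0 = σ then (1 : ℝ) else 0)
      * (∏ i : Fin n, P (s i.castSucc) (s i.succ)) * ∏ i, w (s i) = fkIter P w n σ := by
  induction n with
  | zero =>
    intro σ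
    rw [Fintype.sum_equiv (Equiv.funUnique (Fin 1) S) _
      (fun x => (if x = σ then (1 : ℝ) else 0) * w x)]
    · simp [fkIter]
    · intro s; simp [Fin.default_eq_zero]
  | succ n ih =>
    intro σ
    rw [← Fintype.sum_equiv (Fin.consEquiv (fun _ : Fin (n + 2) => S)) (fun p : S × (Fin (n + 1) → S) =>
      (if p.1 = σ then (1 : ℝ) else 0) * (P p.1 (p.2 0) *
        ∏ i : Fin n, P (p.2 i.castSucc) (p.2 i.succ)) * (w p.1 * ∏ i, w (p.2 i)))]
    · rw [Fintype.sum_prod_type, Finset.sum_eq_single σ]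
      · simp only [fkIter, ← ih, if_true, one_mul]
        simp only [Finset.mul_sum]
        rw [Finset.sum_comm]
        refine Finset.sum_congr rfl fun s _ => ?_
        rw [Finset.sum_eq_single (s 0)]
        · simp; ring
        · intro b _ hb; simp [hb.symm]
        · simp
      · intro b _ hb; simp [hb]
      · simp
    · intro p
      obtain ⟨x, s⟩ := p
      simp [Fin.consEquiv, Fin.prod_univ_succ (n := n), Fin.prod_univ_succ (n := n + 1)]

theorem fk_norm {S : Type*} [Fintype S] (P : S → S → ℝ) (π : S → ℝ)
    (hPnonneg : ∀ s t, 0 ≤ P s t) (hπpos : ∀ s, 0 < π s)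
    (hrev : ∀ s t, π s * P s t = π t * P t s)
    (l : ℝ) (hl : 0 < l) (w : S → ℝ) (hw : ∀ s, 0 < w s)
    (hquad : ∀ g : S → ℝ,
      ∑ s, ∑ t, π s * P s t * g s * g t ≤ l * ∑ s, π s * (w s)⁻¹ * g s ^ 2) (n : ℕ) :
    ∑ s, π s * (w s)⁻¹ * fkIter P w n s ^ 2 ≤ (l ^ n) ^ 2 * ∑ s, π s * w s := by
  induction n with
  | zero =>
    simp only [fkIter, pow_zero, one_pow, one_mul]
    refine le_of_eq (Finset.sum_congr rfl fun s _ => ?_)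
    have := (hw s).ne'
    field_simp
  | succ n ih =>
    have h := op_bound P π hPnonneg hπpos hrev l hl w hw hquad (fkIter P w n)
    simp only [fkIter]
    refine h.trans ((mul_le_mul_of_nonneg_left ih (sq_nonneg l)).trans (le_of_eq ?_))
    ring

theorem bad_prob {Ω S : Type*} [MeasurableSpace Ω] [Fintype S]
    (μ : Measure Ω)
    (P : S → S → ℝ) (ω : S → ℝ) (hPnonneg : ∀ s t, 0 ≤ P s t) (σ₀ : S)
    (X : ℕ → Ω → S)
    (hjoint : ∀ (n : ℕ) (s : ℕ → S),
      μ {a | ∀ i ≤ n, X i a = s i}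
        = ENNReal.ofReal ((if s 0 = σ₀ then (1 : ℝ) else 0)
            * ∏ i ∈ Finset.range n, P (s i) (s (i + 1))))
    (k : ℕ) (θ : ℝ) (hθ : 0 ≤ θ) (c : ℝ) :
    μ {a | ¬ ((((Finset.range (k + 1)).filter (fun i => ω (X i a) ≤ ω σ₀)).card : ℝ) ≤ c)}
      ≤ ENNReal.ofReal (Real.exp (-(θ * c)) *
          fkIter P (fun s => if ω s ≤ ω σ₀ then Real.exp θ else 1) k σ₀) := by
  set w : S → ℝ := fun s => if ω s ≤ ω σ₀ then Real.exp θ else 1 with hw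
  have hwpos : ∀ s, 0 < w s := by
    intro s; simp only [hw]; split_ifs <;> positivity
  let e : (Fin (k + 1) → S) → ℕ → S := fun s i => if h : i < k + 1 then s ⟨i, h⟩ else σ₀
  have heF : ∀ s (i : Fin (k + 1)), e s i = s i := by
    intro s i; exact dif_pos i.isLt
  let bad : Finset (Fin (k + 1) → S) := Finset.univ.filter fun s =>
    c < (((Finset.range (k + 1)).filter (fun i => ω (e s i) ≤ ω σ₀)).card : ℝ)
  let T : (Fin (k + 1) → S) → ℝ := fun s => (if s 0 = σ₀ then (1 : ℝ) else 0)
      * (∏ i : Fin k, P (s i.castSucc) (s i.succ)) * ∏ i, w (s i)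
  have hT0 : ∀ s, 0 ≤ T s := by
    intro s
    refine mul_nonneg (mul_nonneg (by split_ifs <;> norm_num)
      (Finset.prod_nonneg fun i _ => hPnonneg _ _)) (Finset.prod_nonneg fun i _ => (hwpos _).le)
  have hsub : {a | ¬ ((((Finset.range (k + 1)).filter (fun i => ω (X i a) ≤ ω σ₀)).card : ℝ) ≤ c)}
      ⊆ ⋃ s ∈ bad, {a | ∀ i ≤ k, X i a = e s i} := by
    intro a ha
    simp only [Set.mem_ofPred_eq, not_le] at ha
    simp only [Set.mem_iUnion]
    have hx : ∀ i < k + 1, e (fun j : Fin (k + 1) => X j a) i = X i a := by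
      intro i hi; exact dif_pos hi
    refine ⟨fun j => X j a, ?_, ?_⟩
    · simp only [bad, Finset.mem_filter, Finset.mem_univ, true_and]
      rw [Finset.filter_congr (q := fun i => ω (X i a) ≤ ω σ₀)]
      · exact ha
      · intro i hi; rw [hx i (Finset.mem_range.1 hi)]
    · intro i hi
      exact (hx i (by omega)).symm
  refine (measure_mono hsub).trans ((measure_biUnion_finset_le _ _).trans ?_)
  have hterm : ∀ s ∈ bad, μ {a | ∀ i ≤ k, X i a = e s i}
      ≤ ENNReal.ofReal (Real.exp (-(θ * c)) * T s) := by
    intro s hs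
    simp only [bad, Finset.mem_filter, Finset.mem_univ, true_and] at hs
    rw [hjoint]
    apply ENNReal.ofReal_le_ofReal
    have h0 : e s 0 = s 0 := heF s 0
    have hp : ∏ i ∈ Finset.range k, P (e s i) (e s (i + 1))
        = ∏ i : Fin k, P (s i.castSucc) (s i.succ) := by
      rw [← Fin.prod_univ_eq_prod_range (fun i => P (e s i) (e s (i + 1)))]
      refine Finset.prod_congr rfl fun i _ => ?_
      rw [← heF s i.castSucc, ← heF s i.succ]; simp
    have hwp : ∏ i, w (s i) = Real.exp (θ *
        (((Finset.range (k + 1)).filter (fun i => ω (e s i) ≤ ω σ₀)).card : ℝ)) := by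
      have : ∏ i, w (s i) = ∏ i ∈ Finset.range (k + 1), w (e s i) := by
        rw [← Fin.prod_univ_eq_prod_range (fun i => w (e s i))]
        exact Finset.prod_congr rfl fun i _ => by rw [heF]
      rw [this]
      simp only [hw]
      rw [Finset.prod_ite]
      rw [Finset.prod_const_one, mul_one, Finset.prod_const, ← Real.exp_nat_mul, mul_comm]
    have hge : 1 ≤ Real.exp (-(θ * c)) * ∏ i, w (s i) := by
      rw [hwp, ← Real.exp_add]
      apply Real.one_le_exp
      nlinarith
    rw [h0, hp]
    have hn : 0 ≤ (if s 0 = σ₀ then (1 : ℝ) else 0)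
      * (∏ i : Fin k, P (s i.castSucc) (s i.succ)) :=
      mul_nonneg (by split_ifs <;> norm_num) (Finset.prod_nonneg fun i _ => hPnonneg _ _)
    calc _ ≤ _ := le_mul_of_one_le_right hn hge
      _ = _ := by simp only [T]; ring
  refine (Finset.sum_le_sum hterm).trans ?_
  rw [← ENNReal.ofReal_sum_of_nonneg (fun s _ => mul_nonneg (Real.exp_pos _).le (hT0 s)),
    ← fk_paths, ← Finset.mul_sum]
  apply ENNReal.ofReal_le_ofReal
  refine mul_le_mul_of_nonneg_left ?_ (Real.exp_pos _).le
  exact Finset.sum_le_sum_of_subset_of_nonneg (Finset.subset_univ _) fun s _ _ => hT0 s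

set_option maxHeartbeats 1000000

/-- statistical power of the `√ε` test.  Let `X 0, X 1, ...` be a Markov
chain on a finite state space `S` with transition matrix `P`, reversible with respect to a
stationary distribution `π` with `π s > 0` for all `s`, and let `ω : S → ℝ` be a label
function.  Let `β ∈ [0,1)` upper-bound the second eigenvalue `λ₂` of `P`, in the sense that
for every `f : S → ℝ` with `∑ s, π s * f s = 0` one has
`∑ s t, π s * P s t * f s * f t ≤ β * ∑ s, π s * f s ^ 2`, and set `τ₂ = 1/(1−β)` and
`π_min = min_s π s`.  Fix `σ₀ ∈ S` and `ε ∈ (0,1)` with `π {σ | ω σ ≤ ω σ₀} ≤ ε`.  Then for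
the chain started at `X 0 = σ₀`, the probability that `ω σ₀` is a `2ε`-outlier among
`ω (X 0), ω (X 1), ..., ω (X k)` is at least
`1 − (1 + εk/(10τ₂)) · (1/√π_min) · exp(−ε²k/(20τ₂))`. -/
theorem power_of_sqrt_eps_test
    {Ω S : Type*} [MeasurableSpace Ω] [Fintype S] [Nonempty S]
    (μ : Measure Ω) [IsProbabilityMeasure μ]
    (P : S → S → ℝ) (π : S → ℝ) (ω : S → ℝ)
    (hPnonneg : ∀ s t, 0 ≤ P s t) (hProw : ∀ s, ∑ t, P s t = 1)
    (hπpos : ∀ s, 0 < π s) (hπsum : ∑ s, π s = 1)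
    -- reversibility (detailed balance)
    (hrev : ∀ s t, π s * P s t = π t * P t s)
    (β : ℝ) (hβ0 : 0 ≤ β) (hβ1 : β < 1)
    -- `β` upper-bounds the second eigenvalue `λ₂` of `P`
    (hgap : ∀ f : S → ℝ, (∑ s, π s * f s = 0) →
      ∑ s, ∑ t, π s * P s t * f s * f t ≤ β * ∑ s, π s * f s ^ 2)
    (τ₂ πmin : ℝ)
    (hτ₂ : τ₂ = 1 / (1 - β))
    (hπmin : πmin = Finset.univ.inf' Finset.univ_nonempty π)
    (σ₀ : S) (ε : ℝ) (hε0 : 0 < ε) (hε1 : ε < 1)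
    -- `π {σ : ω σ ≤ ω σ₀} ≤ ε`
    (hσ₀ : ∑ s ∈ Finset.univ.filter (fun s => ω s ≤ ω σ₀), π s ≤ ε)
    -- `X 0, X 1, ...` is the Markov chain with transition matrix `P` started at `X 0 = σ₀`
    (X : ℕ → Ω → S)
    (hjoint : ∀ (n : ℕ) (s : ℕ → S),
      μ {a | ∀ i ≤ n, X i a = s i}
        = ENNReal.ofReal ((if s 0 = σ₀ then (1 : ℝ) else 0)
            * ∏ i ∈ Finset.range n, P (s i) (s (i + 1))))
    (k : ℕ) :
    ENNReal.ofReal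
        (1 - (1 + ε * k / (10 * τ₂)) * (1 / Real.sqrt πmin)
          * Real.exp (-(ε ^ 2) * k / (20 * τ₂)))
      ≤ μ {a | (((Finset.range (k + 1)).filter (fun i => ω (X i a) ≤ ω σ₀)).card : ℝ)
          ≤ 2 * ε * (k + 1)} := by
  set γ : ℝ := 1 - β with hγ
  have hγ0 : 0 < γ := by rw [hγ]; linarith
  have hγ1 : γ ≤ 1 := by rw [hγ]; linarith
  have hτ' : ∀ x c : ℝ, x / (c * τ₂) = x * γ / c := by
    intro x c; rw [hτ₂, one_div, mul_comm c, ← div_div, div_inv_eq_mul]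
  rw [hτ', hτ']
  have hminle : πmin ≤ π σ₀ := by rw [hπmin]; exact Finset.inf'_le _ (Finset.mem_univ _)
  have hmin0 : 0 < πmin := by
    rw [hπmin, Finset.lt_inf'_iff]; intro s _; exact hπpos s
  have hk0 : (0 : ℝ) ≤ k := Nat.cast_nonneg k
  by_cases hε2 : 1 / 2 ≤ ε
  · -- trivial case: every count is at most `k + 1`
    have huniv : {a | (((Finset.range (k + 1)).filter (fun i => ω (X i a) ≤ ω σ₀)).card : ℝ)
          ≤ 2 * ε * (k + 1)} = Set.univ := by
      refine Set.eq_univ_of_forall fun a => ?_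
      have h1 : ((Finset.range (k + 1)).filter (fun i => ω (X i a) ≤ ω σ₀)).card ≤ k + 1 :=
        (Finset.card_filter_le _ _).trans (by simp)
      have h2 : (((Finset.range (k + 1)).filter (fun i => ω (X i a) ≤ ω σ₀)).card : ℝ)
        ≤ k + 1 := by exact_mod_cast h1
      simp only [Set.mem_ofPred_eq]
      nlinarith
    rw [huniv, measure_univ, ← ENNReal.ofReal_one]
    apply ENNReal.ofReal_le_ofReal
    have : 0 ≤ (1 + ε * k * γ / 10) * (1 / Real.sqrt πmin)
          * Real.exp (-(ε ^ 2) * k * γ / 20) := by positivity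
    linarith
  push Not at hε2
  have hπ1 : π σ₀ ≤ 1 := by
    rw [← hπsum]; exact Finset.single_le_sum (fun s _ => (hπpos s).le) (Finset.mem_univ σ₀)
  have hsq1 : 1 ≤ 1 / Real.sqrt πmin := by
    rw [le_div_iff₀ (Real.sqrt_pos.2 hmin0), one_mul]
    exact Real.sqrt_le_one.2 (hminle.trans hπ1)
  rcases Nat.eq_zero_or_pos k with hk | hk
  · subst hk
    have : ENNReal.ofReal (1 - (1 + ε * (0 : ℕ) * γ / 10) * (1 / Real.sqrt πmin)
          * Real.exp (-(ε ^ 2) * (0 : ℕ) * γ / 20)) = 0 := by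
      apply ENNReal.ofReal_of_nonpos
      simp only [Nat.cast_zero, mul_zero, zero_mul, zero_div, add_zero, one_mul, Real.exp_zero, mul_one]
      linarith
    rw [this]; exact zero_le
  have hk1 : (1 : ℝ) ≤ k := by exact_mod_cast hk
  -- main case
  set θ : ℝ := ε * γ / 5 with hθ
  have hθ0 : 0 < θ := by positivity
  set l : ℝ := 1 + ε ^ 2 * γ / 4 with hl
  have hl0 : 0 < l := by positivity
  set w : S → ℝ := fun s => if ω s ≤ ω σ₀ then Real.exp θ else 1 with hw
  have hwpos : ∀ s, 0 < w s := by
    intro s; simp only [hw]; split_ifs <;> positivity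
  set r : ℝ := ε ^ 2 / 4 with hr
  set p : ℝ := ∑ s ∈ Finset.univ.filter (fun s => ω s ≤ ω σ₀), π s with hp
  have hp0 : 0 ≤ p := Finset.sum_nonneg fun s _ => (hπpos s).le
  have hpc : ∑ s ∈ Finset.univ.filter (fun s => ¬ ω s ≤ ω σ₀), π s = 1 - p := by
    have := Finset.sum_filter_add_sum_filter_not Finset.univ (fun s => ω s ≤ ω σ₀) π
    linarith
  -- the weights
  set v : S → ℝ := fun s => (l * (w s)⁻¹ - β) / γ with hv
  have hvA : (1 + r) * (1 - ε / 5) ≤ (l * (Real.exp θ)⁻¹ - β) / γ := by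
    rw [le_div_iff₀ hγ0, ← Real.exp_neg]
    have h1 : 1 - θ ≤ Real.exp (-θ) := by linarith [Real.add_one_le_exp (-θ)]
    have h2 := mul_le_mul_of_nonneg_left h1 hl0.le
    have h3 : (1 + r) * (1 - ε / 5) * γ ≤ l * (1 - θ) - β := by
      have : l * (1 - θ) - β - (1 + r) * (1 - ε / 5) * γ = r * γ * (1 - γ) * (ε / 5) := by
        rw [hl, hθ, hr, hγ]; ring
      have h4 : 0 ≤ r * γ * (1 - γ) * (ε / 5) := by
        have : 0 ≤ 1 - γ := by linarith
        positivity
      linarith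
    linarith
  have hvB : (l * (1 : ℝ)⁻¹ - β) / γ = 1 + r := by
    rw [div_eq_iff hγ0.ne', hl, hr, hγ]; ring
  have hr0 : 0 < r := by positivity
  have hlow : 0 < (1 + r) * (1 - ε / 5) := mul_pos (by linarith) (by linarith)
  have hvpos : ∀ s, 0 < v s := by
    intro s; simp only [hv, hw]
    split_ifs
    · exact hlow.trans_le hvA
    · rw [hvB]; linarith
  have hvsum : ∑ s, π s / v s ≤ 1 := by
    have hbound : ∀ s, π s / v s ≤ if ω s ≤ ω σ₀ then π s * ((1 + r) * (1 - ε / 5))⁻¹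
        else π s * (1 + r)⁻¹ := by
      intro s
      have := hvpos s
      simp only [hv, hw] at this ⊢
      split_ifs with h
      · rw [div_eq_mul_inv]
        exact mul_le_mul_of_nonneg_left (inv_anti₀ hlow hvA) (hπpos s).le
      · rw [hvB, div_eq_mul_inv]
    refine (Finset.sum_le_sum fun s _ => hbound s).trans ?_
    rw [Finset.sum_ite, ← Finset.sum_mul, ← Finset.sum_mul, hpc, ← hp]
    have e : p * ((1 + r) * (1 - ε / 5))⁻¹ + (1 - p) * (1 + r)⁻¹
        = (p + (1 - p) * (1 - ε / 5)) / ((1 + r) * (1 - ε / 5)) := by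
      have h1 : 1 + r ≠ 0 := by positivity
      have h2 : 1 - ε / 5 ≠ 0 := by linarith
      rw [mul_inv, eq_div_iff hlow.ne']
      have h3 := mul_inv_cancel₀ h1
      have h4 := mul_inv_cancel₀ h2
      linear_combination (p * ((1 - ε / 5) * (1 - ε / 5)⁻¹) + (1 - p) * (1 - ε / 5)) * h3 + p * h4
    rw [e, div_le_one hlow, hr]
    nlinarith [sq_nonneg ε, mul_le_mul_of_nonneg_right hσ₀ hε0.le, mul_pos hε0 hε0,
      mul_pos (mul_pos hε0 hε0) (sub_pos.2 hε2)]
  have hquad := fun g => quad_upper P π hProw hπpos hπsum hrev β hβ1 hgap l (fun s => (w s)⁻¹) v hvpos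
    (fun s => by simp only [hv]; rw [← hγ]; field_simp) hvsum g
  have hnorm := fk_norm P π hPnonneg hπpos hrev l hl0 w hwpos hquad k
  set F : ℝ := fkIter P w k σ₀ with hF
  have hwσ : w σ₀ = Real.exp θ := by simp [hw]
  have hθ1 : θ ≤ 1 := by rw [hθ]; nlinarith
  have hπw : ∑ s, π s * w s ≤ Real.exp (2 * (ε * θ)) := by
    have e1 : ∑ s, π s * w s = p * Real.exp θ + (1 - p) := by
      simp only [hw, mul_ite, mul_one]
      rw [Finset.sum_ite, ← Finset.sum_mul, hpc]
    have e2 : Real.exp θ ≤ 1 + 2 * θ := by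
      have := Real.abs_exp_sub_one_le (x := θ) (by rw [abs_of_pos hθ0]; exact hθ1)
      rw [abs_of_pos hθ0] at this
      linarith [le_abs_self (Real.exp θ - 1)]
    have e3 := Real.add_one_le_exp (2 * (ε * θ))
    rw [e1]
    nlinarith [mul_le_mul_of_nonneg_left e2 hp0, mul_le_mul_of_nonneg_right hσ₀ hθ0.le]
  have hlexp : l ≤ Real.exp (ε ^ 2 * γ / 4) := by
    rw [hl]; linarith [Real.add_one_le_exp (ε ^ 2 * γ / 4)]
  have hlk : l ^ k ≤ Real.exp (k * (ε ^ 2 * γ / 4)) := by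
    rw [Real.exp_nat_mul]; exact pow_le_pow_left₀ hl0.le hlexp k
  have hFsq : π σ₀ * Real.exp (-θ) * F ^ 2
      ≤ Real.exp (k * (ε ^ 2 * γ / 4)) ^ 2 * Real.exp (2 * (ε * θ)) := by
    calc π σ₀ * Real.exp (-θ) * F ^ 2 = π σ₀ * (w σ₀)⁻¹ * fkIter P w k σ₀ ^ 2 := by
          rw [hwσ, Real.exp_neg]
      _ ≤ ∑ s, π s * (w s)⁻¹ * fkIter P w k s ^ 2 :=
          Finset.single_le_sum (f := fun s => π s * (w s)⁻¹ * fkIter P w k s ^ 2)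
            (fun s _ => by have := hπpos s; have := hwpos s; positivity) (Finset.mem_univ σ₀)
      _ ≤ _ := hnorm
      _ ≤ _ := by
          refine mul_le_mul (pow_le_pow_left₀ (by positivity) hlk 2) hπw ?_ (by positivity)
          exact Finset.sum_nonneg fun s _ => mul_nonneg (hπpos s).le (hwpos s).le
  have hFle : F ≤ 1 / Real.sqrt πmin * Real.exp (θ / 2 + k * (ε ^ 2 * γ / 4) + ε * θ) := by
    refine (abs_le_of_sq_le_sq' (a := F) ?_ ?_).2; rotate_left
    · positivity
    · rw [mul_pow, div_pow, Real.sq_sqrt hmin0.le, one_pow, div_mul_eq_mul_div, one_mul,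
        le_div_iff₀ hmin0]
      have e4 : Real.exp (θ / 2 + k * (ε ^ 2 * γ / 4) + ε * θ) ^ 2
          = Real.exp θ * (Real.exp (k * (ε ^ 2 * γ / 4)) ^ 2 * Real.exp (2 * (ε * θ))) := by
        rw [← Real.exp_nat_mul, ← Real.exp_nat_mul, ← Real.exp_add, ← Real.exp_add]
        congr 1; push_cast; ring
      rw [e4]
      calc F ^ 2 * πmin ≤ F ^ 2 * π σ₀ := mul_le_mul_of_nonneg_left hminle (sq_nonneg F)
        _ = Real.exp θ * (π σ₀ * Real.exp (-θ) * F ^ 2) := by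
            rw [Real.exp_neg]; have := (Real.exp_pos θ).ne'; field_simp
        _ ≤ _ := mul_le_mul_of_nonneg_left hFsq (Real.exp_pos _).le
  have hbad := bad_prob μ P ω hPnonneg σ₀ X hjoint k θ hθ0.le (2 * ε * (k + 1))
  have hfinal : Real.exp (-(θ * (2 * ε * (k + 1)))) * F
      ≤ (1 + ε * k * γ / 10) * (1 / Real.sqrt πmin) * Real.exp (-(ε ^ 2) * k * γ / 20) := by
    have hx : Real.exp (θ / 2) ≤ (1 + ε * γ / 10) * Real.exp (ε ^ 2 * γ / 100) := by
      set x : ℝ := ε * γ / 10 with hx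
      have hx0 : 0 < x := by positivity
      have e5 : θ / 2 = x := by rw [hθ, hx]; ring
      have e6 : Real.exp x ≤ (1 + x) * Real.exp (x ^ 2) := by
        have h1 : (1 - x + x ^ 2) ≤ Real.exp (-x + x ^ 2) := by
          linarith [Real.add_one_le_exp (-x + x ^ 2)]
        have h2 : 1 ≤ (1 + x) * Real.exp (-x + x ^ 2) := by
          have := mul_le_mul_of_nonneg_left h1 (by positivity : 0 ≤ 1 + x)
          have h3 : 0 ≤ x ^ 3 := by positivity
          nlinarith
        calc Real.exp x = Real.exp x * 1 := (mul_one _).symm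
          _ ≤ Real.exp x * ((1 + x) * Real.exp (-x + x ^ 2)) :=
              mul_le_mul_of_nonneg_left h2 (Real.exp_pos _).le
          _ = (1 + x) * (Real.exp x * Real.exp (-x + x ^ 2)) := by ring
          _ = _ := by rw [← Real.exp_add]; congr 2; ring
      have e7 : x ^ 2 ≤ ε ^ 2 * γ / 100 := by
        have : x ^ 2 = ε ^ 2 * γ / 100 * γ := by rw [hx]; ring
        rw [this]
        exact mul_le_of_le_one_right (by positivity) hγ1
      rw [e5]
      exact e6.trans (mul_le_mul_of_nonneg_left (Real.exp_le_exp.2 e7) (by positivity))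
    have hE : Real.exp (-(θ * (2 * ε * (k + 1)))) *
        Real.exp (θ / 2 + k * (ε ^ 2 * γ / 4) + ε * θ)
        ≤ Real.exp (θ / 2) * Real.exp (-(3 * ε ^ 2 * γ * k / 20)) := by
      rw [← Real.exp_add, ← Real.exp_add, Real.exp_le_exp, hθ]
      have : 0 < ε ^ 2 * γ := by positivity
      nlinarith
    have hE2 : Real.exp (θ / 2) * Real.exp (-(3 * ε ^ 2 * γ * k / 20))
        ≤ (1 + ε * k * γ / 10) * Real.exp (-(ε ^ 2) * k * γ / 20) := by
      calc _ ≤ ((1 + ε * γ / 10) * Real.exp (ε ^ 2 * γ / 100)) *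
            Real.exp (-(3 * ε ^ 2 * γ * k / 20)) :=
            mul_le_mul_of_nonneg_right hx (Real.exp_pos _).le
        _ = (1 + ε * γ / 10) * Real.exp (ε ^ 2 * γ / 100 + -(3 * ε ^ 2 * γ * k / 20)) := by
            rw [Real.exp_add]; ring
        _ ≤ _ := by
            have hεγ : 0 < ε * γ := by positivity
            have : 0 < ε ^ 2 * γ := by positivity
            refine mul_le_mul ?_ (Real.exp_le_exp.2 ?_) (Real.exp_pos _).le (by positivity)
            · nlinarith
            · nlinarith
    calc _ ≤ Real.exp (-(θ * (2 * ε * (k + 1)))) *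
          (1 / Real.sqrt πmin * Real.exp (θ / 2 + k * (ε ^ 2 * γ / 4) + ε * θ)) :=
          mul_le_mul_of_nonneg_left hFle (Real.exp_pos _).le
      _ = 1 / Real.sqrt πmin * (Real.exp (-(θ * (2 * ε * (k + 1)))) *
        Real.exp (θ / 2 + k * (ε ^ 2 * γ / 4) + ε * θ)) := by ring
      _ ≤ 1 / Real.sqrt πmin * ((1 + ε * k * γ / 10) * Real.exp (-(ε ^ 2) * k * γ / 20)) :=
          mul_le_mul_of_nonneg_left (hE.trans hE2) (by positivity)
      _ = _ := by ring
  have hb2 := hbad.trans (ENNReal.ofReal_le_ofReal hfinal)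
  rw [ENNReal.ofReal_sub _ (by positivity), ENNReal.ofReal_one, tsub_le_iff_right]
  calc (1 : ℝ≥0∞) = μ Set.univ := measure_univ.symm
    _ ≤ μ ({a | (((Finset.range (k + 1)).filter (fun i => ω (X i a) ≤ ω σ₀)).card : ℝ)
          ≤ 2 * ε * (k + 1)} ∪ {a | ¬ ((((Finset.range (k + 1)).filter
            (fun i => ω (X i a) ≤ ω σ₀)).card : ℝ) ≤ 2 * ε * (k + 1))}) := by
        refine measure_mono fun a _ => ?_
        exact em _
    _ ≤ _ := (measure_union_le _ _).trans (add_le_add_right hb2 _)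
end
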